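/- Let G be a connected triangle-free graph. Then μ(G) = 3 if and only if G is a tree with exactly three leaves or G is a frog graph. -/

import Mathlib

open SimpleGraph

/-- Two vertices `u v ∈ X` are `X`-visible in `G`: there is a shortest `u,v`-path
whose only vertices in `X` are `u` and `v`. -/
def VisiblePair {V : Type*} (G : SimpleGraph V) (X : Set V) (u v : V) : Prop :=
  ∃ p : G.Walk u v, p.IsPath ∧ p.length = G.dist u v ∧
    ∀ w ∈ p.support, w ∈ X → w = u ∨ w = v

/-- `X` is a mutual-visibility set of `G`. -/
def IsMVSet {V : Type*} (G : SimpleGraph V) (X : Set V) : Prop :=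
  ∀ u ∈ X, ∀ v ∈ X, u ≠ v → VisiblePair G X u v

/-- `X` is an independent set of `G`. -/
def IsIndep {V : Type*} (G : SimpleGraph V) (X : Set V) : Prop :=
  ∀ u ∈ X, ∀ v ∈ X, ¬ G.Adj u v

/-- The mutual-visibility number `μ(G)`. -/
noncomputable def mu {V : Type*} (G : SimpleGraph V) : ℕ :=
  sSup {n | ∃ X : Set V, IsMVSet G X ∧ X.ncard = n}

/-- The independent mutual-visibility number `μᵢ(G)`. -/
noncomputable def muI {V : Type*} (G : SimpleGraph V) : ℕ :=
  sSup {n | ∃ X : Set V, IsMVSet G X ∧ IsIndep G X ∧ X.ncard = n}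

/-- The independence number `α(G)`. -/
noncomputable def indepNumber {V : Type*} (G : SimpleGraph V) : ℕ :=
  sSup {n | ∃ X : Set V, IsIndep G X ∧ X.ncard = n}

/-- The frog graph built from a cycle on `n ≥ 3` vertices with tails of `a` and `b`
extra vertices attached at the antipodal cycle vertices `0` and `⌊n/2⌋`. -/
def frogGraph (n a b : ℕ) : SimpleGraph (Fin n ⊕ (Fin a ⊕ Fin b)) :=
  SimpleGraph.fromRel (fun x y =>
    match x, y with
    | Sum.inl i, Sum.inl j => (j : ℕ) = ((i : ℕ) + 1) % n
    | Sum.inl i, Sum.inr (Sum.inl k) => (i : ℕ) = 0 ∧ (k : ℕ) = 0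
    | Sum.inl i, Sum.inr (Sum.inr k) => (i : ℕ) = n / 2 ∧ (k : ℕ) = 0
    | Sum.inr (Sum.inl k), Sum.inr (Sum.inl l) => (l : ℕ) = (k : ℕ) + 1
    | Sum.inr (Sum.inr k), Sum.inr (Sum.inr l) => (l : ℕ) = (k : ℕ) + 1
    | _, _ => False)

/-- `G` is a frog graph: a cycle with two (possibly trivial) paths attached at
two antipodal vertices of the cycle. -/
def IsFrog {V : Type*} (G : SimpleGraph V) : Prop :=
  ∃ (n a b : ℕ), 3 ≤ n ∧ Nonempty (G ≃g frogGraph n a b)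



section MutualVisibility

variable {V : Type*} {G : SimpleGraph V}

theorem VisiblePair.symm {X : Set V} {x y : V} (h : VisiblePair G X x y) :
    VisiblePair G X y x := by
  obtain ⟨p, hp, hl, hX⟩ := h
  refine ⟨p.reverse, hp.reverse, by rw [Walk.length_reverse, hl, dist_comm], fun w hw hwX => ?_⟩
  rw [Walk.support_reverse, List.mem_reverse] at hw
  exact (hX w hw hwX).symm

theorem SimpleGraph.Walk.dist_add_dist_le_length {x y z : V} (p : G.Walk x y)
    (hz : z ∈ p.support) : G.dist x z + G.dist z y ≤ p.length := by
  classical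
  rw [← p.take_spec hz, Walk.length_append]
  exact add_le_add (dist_le _) (dist_le _)

/-- A walk avoiding `X` makes its ends visible as soon as no detour through `X` is shorter. -/
theorem visiblePair_of_walk (hconn : G.Connected) {X : Set V} {x y : V} (p : G.Walk x y)
    (hp : ∀ w ∈ p.support, w ∈ X → w = x ∨ w = y)
    (hd : ∀ z ∈ X, z ≠ x → z ≠ y → p.length ≤ G.dist x z + G.dist z y) :
    VisiblePair G X x y := by
  by_cases h : p.length = G.dist x y
  · exact ⟨p, p.isPath_of_length_eq_dist h, h, hp⟩
  · obtain ⟨q, hq, hql⟩ := hconn.exists_path_of_dist x y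
    refine ⟨q, hq, hql, fun w hw hwX => ?_⟩
    by_contra! hne
    have h1 := hd w hwX hne.1 hne.2
    have h2 := q.dist_add_dist_le_length hw
    have h3 := G.dist_le p
    omega

theorem isMVSet_four {X : Set V} {a b c d : V} (hX : X = {a, b, c, d})
    (hab : VisiblePair G X a b) (hac : VisiblePair G X a c) (had : VisiblePair G X a d)
    (hbc : VisiblePair G X b c) (hbd : VisiblePair G X b d) (hcd : VisiblePair G X c d) :
    IsMVSet G X := by
  intro u hu v hv huv
  have hu' : u = a ∨ u = b ∨ u = c ∨ u = d := by simpa [hX] using hu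
  have hv' : v = a ∨ v = b ∨ v = c ∨ v = d := by simpa [hX] using hv
  rcases hu' with rfl | rfl | rfl | rfl <;> rcases hv' with rfl | rfl | rfl | rfl <;>
    first
    | exact absurd rfl huv
    | assumption
    | (apply VisiblePair.symm; assumption)

theorem mu_eq_three_iff [Finite V] :
    mu G = 3 ↔ (∃ X, IsMVSet G X ∧ X.ncard = 3) ∧ ∀ X, IsMVSet G X → X.ncard ≤ 3 := by
  have hbdd : BddAbove {n | ∃ X : Set V, IsMVSet G X ∧ X.ncard = n} := by
    refine ⟨Nat.card V, ?_⟩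
    rintro n ⟨X, -, rfl⟩
    exact Set.ncard_le_card X
  have hne : {n | ∃ X : Set V, IsMVSet G X ∧ X.ncard = n}.Nonempty :=
    ⟨0, ∅, fun u hu => hu.elim, by simp⟩
  constructor
  · intro h
    refine ⟨?_, fun X hX => h ▸ le_csSup hbdd ⟨X, hX, rfl⟩⟩
    have := Nat.sSup_mem hne hbdd
    rwa [show sSup {n | ∃ X : Set V, IsMVSet G X ∧ X.ncard = n} = 3 from h] at this
  · rintro ⟨h3, hle⟩
    apply le_antisymm
    · apply csSup_le hne
      rintro n ⟨X, hX, rfl⟩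
      exact hle X hX
    · exact le_csSup hbdd h3

theorem dist_eq_two (hconn : G.Connected) (htf : G.CliqueFree 3) {u a b : V}
    (ha : G.Adj u a) (hb : G.Adj u b) (hab : a ≠ b) : G.dist a b = 2 := by
  have hna : ¬ G.Adj a b := fun h => by
    classical
    exact htf {u, a, b} (is3Clique_triple_iff.2 ⟨ha, hb, h⟩)
  have h1 := hconn.one_lt_dist_of_ne_of_not_adj hab hna
  have h2 := G.dist_le (Walk.cons ha.symm (Walk.cons hb Walk.nil))
  simp at h2
  omega

theorem SimpleGraph.Adj.dist_le_dist_add_one {x y : V} (hconn : G.Connected) (h : G.Adj x y)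
    (z : V) : G.dist x z ≤ G.dist y z + 1 := by
  have := hconn.dist_triangle (u := x) (v := y) (w := z)
  rw [dist_eq_one_iff_adj.2 h] at this
  omega

theorem visiblePair_of_common_neighbor (hconn : G.Connected) {X : Set V} {u a b : V}
    (ha : G.Adj u a) (hb : G.Adj u b) (hu : u ∉ X) : VisiblePair G X a b := by
  refine visiblePair_of_walk hconn (Walk.cons ha.symm (Walk.cons hb Walk.nil)) ?_ ?_
  · intro w hw hwX
    simp at hw
    grind
  · intro z _ h1 h2
    have := hconn.pos_dist_of_ne h1
    have := hconn.pos_dist_of_ne h2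
    rw [G.dist_comm (u := a)]
    simp
    omega

/-- Two vertices, each with two neighbours that are farther from the other one. -/
theorem exists_isMVSet_four_of_double_broom (hconn : G.Connected) (htf : G.CliqueFree 3)
    {u v a₁ a₂ b₁ b₂ : V} (ha₁ : G.Adj u a₁) (ha₂ : G.Adj u a₂) (hb₁ : G.Adj v b₁)
    (hb₂ : G.Adj v b₂) (ha : a₁ ≠ a₂) (hb : b₁ ≠ b₂) (h₁₁ : a₁ ≠ b₁) (h₁₂ : a₁ ≠ b₂)
    (h₂₁ : a₂ ≠ b₁) (h₂₂ : a₂ ≠ b₂)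
    (da₁ : G.dist a₁ v = G.dist u v + 1) (da₂ : G.dist a₂ v = G.dist u v + 1)
    (db₁ : G.dist b₁ u = G.dist u v + 1) (db₂ : G.dist b₂ u = G.dist u v + 1) :
    ∃ X, IsMVSet G X ∧ X.ncard = 4 := by
  obtain ⟨p, -, hp⟩ := hconn.exists_path_of_dist u v
  have hps : ∀ w ∈ p.support, G.dist w v ≤ G.dist u v ∧ G.dist w u ≤ G.dist u v := by
    intro w hw
    have := p.dist_add_dist_le_length hw
    rw [G.dist_comm (u := u) (v := w)] at this
    omega
  have hX : ∀ w ∈ p.support, w ∉ ({a₁, a₂, b₁, b₂} : Set V) := by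
    rintro w hw (rfl | rfl | rfl | rfl) <;> have := hps _ hw <;> omega
  have key : ∀ a b, G.Adj u a → G.Adj v b →
      (∀ z ∈ ({a₁, a₂, b₁, b₂} : Set V), z ≠ a → z ≠ b →
        G.dist u v + 2 ≤ G.dist a z + G.dist z b) →
      VisiblePair G {a₁, a₂, b₁, b₂} a b := by
    intro a b hua hvb hz
    refine visiblePair_of_walk hconn (Walk.cons hua.symm (p.concat hvb)) ?_ ?_
    · intro w hw hwX
      simp [Walk.support_concat] at hw
      rcases hw with h | h | h
      · exact Or.inl h
      · exact absurd hwX (hX w h)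
      · exact Or.inr h
    · rwa [Walk.length_cons, Walk.length_concat, hp]
  have ea := dist_eq_two hconn htf ha₁ ha₂ ha
  have eb := dist_eq_two hconn htf hb₁ hb₂ hb
  have ea' := dist_eq_two hconn htf ha₂ ha₁ ha.symm
  have eb' := dist_eq_two hconn htf hb₂ hb₁ hb.symm
  have far : ∀ a b, G.Adj v b → G.dist a v = G.dist u v + 1 → G.dist u v ≤ G.dist a b := by
    intro a b h h'
    have := h.dist_le_dist_add_one hconn a
    rw [G.dist_comm, G.dist_comm (u := b)] at this
    omega
  have f₁₁ := far _ _ hb₁ da₁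
  have f₁₂ := far _ _ hb₂ da₁
  have f₂₁ := far _ _ hb₁ da₂
  have f₂₂ := far _ _ hb₂ da₂
  refine ⟨{a₁, a₂, b₁, b₂}, isMVSet_four rfl ?_ (key _ _ ha₁ hb₁ ?_) (key _ _ ha₁ hb₂ ?_)
    (key _ _ ha₂ hb₁ ?_) (key _ _ ha₂ hb₂ ?_) ?_, ?_⟩
  · exact visiblePair_of_common_neighbor hconn ha₁ ha₂ (hX u p.start_mem_support)
  iterate 4
    rintro z (rfl | rfl | rfl | rfl) h1 h2 <;>
    first | exact absurd rfl h1 | exact absurd rfl h2 | omega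
  · exact visiblePair_of_common_neighbor hconn hb₁ hb₂ (hX v p.end_mem_support)
  · rw [Set.ncard_insert_of_notMem (by simp [*]), Set.ncard_insert_of_notMem (by simp [*]),
      Set.ncard_pair hb]

/-! ### Trees -/

theorem isMVSet_leaves [Fintype V] [DecidableRel G.Adj] (hconn : G.Connected) :
    IsMVSet G {v | G.degree v = 1} := by
  intro u _ v _ _
  obtain ⟨p, hp, hl⟩ := hconn.exists_path_of_dist u v
  refine ⟨p, hp, hl, fun w hw hwX => ?_⟩
  by_contra! hne
  obtain ⟨i, hi, hil⟩ := Walk.mem_support_iff_exists_getVert.1 hw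
  have h0 : i ≠ 0 := by rintro rfl; simp at hi; exact hne.1 hi.symm
  have hL : i ≠ p.length := by rintro rfl; simp at hi; exact hne.2 hi.symm
  have a1 : G.Adj w (p.getVert (i + 1)) := hi ▸ p.adj_getVert_succ (by omega)
  have a2 : G.Adj w (p.getVert (i - 1)) := by
    have := p.adj_getVert_succ (i := i - 1) (by omega)
    rw [Nat.sub_add_cancel (by omega), hi] at this
    exact this.symm
  obtain ⟨x, -, hx⟩ := degree_eq_one_iff_existsUnique_adj.1 hwX
  have := hp.getVert_injOn (show i + 1 ≤ p.length by omega) (show i - 1 ≤ p.length by omega)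
    ((hx _ a1).trans (hx _ a2).symm)
  omega

theorem SimpleGraph.IsTree.mem_support_of_dist_add_dist (hG : G.IsTree) {x y z : V}
    (h : G.dist x z + G.dist z y = G.dist x y) {p : G.Walk x y} (hp : p.IsPath) :
    z ∈ p.support := by
  obtain ⟨q, -, hq⟩ := hG.connected.exists_path_of_dist x z
  obtain ⟨r, -, hr⟩ := hG.connected.exists_path_of_dist z y
  have hqr : (q.append r).IsPath :=
    Walk.isPath_of_length_eq_dist _ (by rw [Walk.length_append]; omega)
  have := congrArg Subtype.val
    ((hG.isAcyclic.subsingleton_path x y).elim ⟨p, hp⟩ ⟨_, hqr⟩)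
  simp only at this
  rw [this, Walk.mem_support_append_iff]
  exact Or.inl q.end_mem_support

theorem SimpleGraph.IsTree.exists_adj_dist_eq_add_one [Fintype V] [DecidableRel G.Adj]
    (hG : G.IsTree) {r v : V} (hv : v ≠ r) (hdeg : G.degree v ≠ 1) :
    ∃ y, G.Adj v y ∧ G.dist r y = G.dist r v + 1 := by
  by_contra! hcon
  apply hdeg
  have : Nontrivial V := ⟨⟨v, r, hv⟩⟩
  obtain ⟨p, hp, -⟩ := hG.connected.exists_path_of_dist r v
  have key : ∀ y, G.Adj v y → y = p.penultimate := by
    intro y hy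
    apply hG.isAcyclic.eq_penultimate_of_adj_end hp hy
    apply hG.mem_support_of_dist_add_dist _ hp
    have h1 := hG.dist_eq_dist_add_one_of_adj r hy
    rw [dist_eq_one_iff_adj.2 hy.symm]
    have := hcon y hy
    omega
  rw [degree_eq_one_iff_existsUnique_adj]
  obtain ⟨y, hy⟩ := hG.connected.preconnected.exists_adj_of_nontrivial v
  exact ⟨y, hy, fun z hz => (key z hz).trans (key y hy).symm⟩

/-- Every vertex `x ≠ r` of a finite tree has a leaf behind it, as seen from `r`. -/
theorem SimpleGraph.IsTree.exists_leaf_behind [Fintype V] [DecidableRel G.Adj] (hG : G.IsTree)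
    {r x : V} (hx : x ≠ r) :
    ∃ l, G.degree l = 1 ∧ G.dist r x + G.dist x l = G.dist r l := by
  classical
  obtain ⟨l, hl, hmax⟩ := Finset.exists_max_image
    (Finset.univ.filter fun v => G.dist r x + G.dist x v = G.dist r v) (G.dist r) ⟨x, by simp⟩
  simp only [Finset.mem_filter, Finset.mem_univ, true_and] at hl hmax
  refine ⟨l, ?_, hl⟩
  by_contra hdeg
  have hne : l ≠ r := by
    rintro rfl
    have := hG.connected.pos_dist_of_ne hx
    have := G.dist_self (v := l)
    rw [G.dist_comm (u := x)] at *
    omega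
  obtain ⟨y, hy, hd⟩ := hG.exists_adj_dist_eq_add_one hne hdeg
  have h1 := hG.connected.dist_triangle (u := r) (v := x) (w := y)
  have h2 := hG.connected.dist_triangle (u := x) (v := l) (w := y)
  rw [dist_eq_one_iff_adj.2 hy] at h2
  have := hmax y (by omega)
  omega

theorem SimpleGraph.IsTree.not_between_of_isMVSet (hG : G.IsTree) {X : Set V}
    (hX : IsMVSet G X) {x y z : V} (hx : x ∈ X) (hy : y ∈ X) (hz : z ∈ X) (hzx : z ≠ x)
    (hzy : z ≠ y) : G.dist x z + G.dist z y ≠ G.dist x y := by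
  intro h
  have hxy : x ≠ y := by
    rintro rfl
    have := hG.connected.pos_dist_of_ne hzx
    simp only [dist_self] at h
    omega
  obtain ⟨p, hp, -, hpX⟩ := hX x hx y hy hxy
  rcases hpX z (hG.mem_support_of_dist_add_dist h hp) hz with h | h
  · exact hzx h
  · exact hzy h

theorem SimpleGraph.IsTree.between_of_between (hG : G.IsTree) {r x y l : V}
    (hx : G.dist r x + G.dist x l = G.dist r l) (hy : G.dist r y + G.dist y l = G.dist r l) :
    G.dist r x + G.dist x y = G.dist r y ∨ G.dist r y + G.dist y x = G.dist r x := by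
  obtain ⟨p, -, hp⟩ := hG.connected.exists_path_of_dist r y
  obtain ⟨q, -, hq⟩ := hG.connected.exists_path_of_dist y l
  have hpq : (p.append q).length = G.dist r l := by rw [Walk.length_append]; omega
  have := hG.mem_support_of_dist_add_dist hx (Walk.isPath_of_length_eq_dist _ hpq)
  have t1 := hG.connected.dist_triangle (u := r) (v := x) (w := y)
  have t2 := hG.connected.dist_triangle (u := r) (v := y) (w := x)
  rcases (Walk.mem_support_append_iff _ _).1 this with h | h
  · have := p.dist_add_dist_le_length h
    omega
  · have := q.dist_add_dist_le_length h
    omega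

theorem SimpleGraph.IsTree.ncard_le_ncard_leaves [Fintype V] [DecidableRel G.Adj]
    (hG : G.IsTree) {X : Set V} (hX : IsMVSet G X) (h2 : 2 ≤ X.ncard) :
    X.ncard ≤ {v | G.degree v = 1}.ncard := by
  classical
  obtain ⟨r, hr, s, hs, hrs⟩ := (Set.one_lt_ncard (s := X)).1 h2
  have hroot : ∀ x, x ≠ (if x = r then s else r) := by
    intro x
    split_ifs with h
    · exact h ▸ hrs
    · exact h
  choose l hdeg hl using fun x => hG.exists_leaf_behind (hroot x)
  have hcross : ∀ x ∈ X, x ≠ r → l x ≠ l r := by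
    intro x hx hxr he
    have h1 := hl x
    have h2 := hl r
    rw [if_neg hxr, he] at h1
    rw [if_pos rfl] at h2
    have t1 := hG.connected.dist_triangle (u := s) (v := r) (w := x)
    have t2 := hG.connected.dist_triangle (u := s) (v := x) (w := l r)
    by_cases hxs : x = s
    · subst hxs
      have := hG.connected.pos_dist_of_ne hxr
      have := G.dist_comm (u := r) (v := x)
      omega
    · exact hG.not_between_of_isMVSet hX hs hx hr hrs (Ne.symm hxr) (by omega)
  refine Set.ncard_le_ncard_of_injOn l (fun x _ => hdeg x) ?_
  intro x hx y hy hxy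
  by_contra hne
  by_cases hxr : x = r
  · subst hxr
    exact hcross y hy (Ne.symm hne) hxy.symm
  by_cases hyr : y = r
  · subst hyr
    exact hcross x hx hne hxy
  have h1 := hl x
  have h2 := hl y
  rw [if_neg hxr] at h1
  rw [if_neg hyr, ← hxy] at h2
  rcases hG.between_of_between h1 h2 with h | h
  · exact hG.not_between_of_isMVSet hX hr hy hx hxr hne h
  · exact hG.not_between_of_isMVSet hX hr hx hy hyr (Ne.symm hne) h

theorem SimpleGraph.IsTree.mu_eq_three_iff [Fintype V] [DecidableRel G.Adj] (hG : G.IsTree) :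
    mu G = 3 ↔ {v | G.degree v = 1}.ncard = 3 := by
  rw [_root_.mu_eq_three_iff]
  have hL := isMVSet_leaves hG.connected
  constructor
  · rintro ⟨⟨X, hX, h3⟩, hle⟩
    have := hle _ hL
    have := hG.ncard_le_ncard_leaves hX (by omega)
    omega
  · intro h
    refine ⟨⟨_, hL, h⟩, fun X hX => ?_⟩
    by_contra! h4
    have := hG.ncard_le_ncard_leaves hX (by omega)
    omega

/-! ### Shortest cycles -/

theorem length_eq_dist_of_two_mul_le_girth (hconn : G.Connected) {x y : V} {p : G.Walk x y}
    (hp : p.IsPath) (hl : 2 * p.length ≤ G.girth) : p.length = G.dist x y := by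
  classical
  obtain ⟨q, hq, hql⟩ := hconn.exists_path_of_dist x y
  by_cases h : p = q
  · rw [h, hql]
  · obtain ⟨w, _, _, c, hc, hlen⟩ := hp.exists_isCycle_length_le_add_of_ne hq h
    have := girth_le_length hc
    have := G.dist_le p
    omega

theorem four_le_girth (htf : G.CliqueFree 3) (hG : ¬ G.IsAcyclic) : 4 ≤ G.girth := by
  have h3 := three_le_girth hG
  by_contra! h
  obtain ⟨a, w, hw, hl⟩ := exists_girth_eq_length.2 hG
  obtain ⟨s, hs⟩ := is3Clique_iff_exists_cycle_length_three.2 ⟨a, w, hw, by omega⟩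
  exact htf s hs

/-- `c` runs periodically around a cycle of `G` of minimum length. -/
structure IsShortestCycle (G : SimpleGraph V) (c : ℕ → V) : Prop where
  adj : ∀ i, G.Adj (c i) (c (i + 1))
  eq_iff : ∀ i j, c i = c j ↔ i ≡ j [MOD G.girth]

theorem exists_isShortestCycle (hG : ¬ G.IsAcyclic) : ∃ c, IsShortestCycle G c := by
  have h3 := three_le_girth hG
  obtain ⟨a, w, hw, hl⟩ := exists_girth_eq_length.2 hG
  refine ⟨fun i => w.getVert (i % G.girth), fun i => ?_, fun i j => ?_⟩
  · have hlt : i % G.girth < G.girth := Nat.mod_lt _ (by omega)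
    have := w.adj_getVert_succ (i := i % G.girth) (by omega)
    convert this using 1
    rw [Nat.add_mod, Nat.mod_eq_of_lt (show 1 < G.girth by omega)]
    by_cases h : i % G.girth + 1 = G.girth
    · rw [h, Nat.mod_self, Walk.getVert_zero, hl, Walk.getVert_length]
    · rw [Nat.mod_eq_of_lt (by omega)]
  · have hi : i % G.girth < G.girth := Nat.mod_lt _ (by omega)
    have hj : j % G.girth < G.girth := Nat.mod_lt _ (by omega)
    refine ⟨fun h => ?_, fun h => congrArg w.getVert h⟩
    exact hw.getVert_injOn' (show _ ≤ w.length - 1 by omega) (show _ ≤ w.length - 1 by omega) h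

/-- The walk `c i, c (i + 1), …, c (i + m)`. -/
def arc {c : ℕ → V} (hc : ∀ i, G.Adj (c i) (c (i + 1))) (i : ℕ) : (m : ℕ) → G.Walk (c i) (c (i + m))
  | 0 => Walk.nil
  | m + 1 => (arc hc i m).concat (hc (i + m))

@[simp]
theorem length_arc {c : ℕ → V} (hc : ∀ i, G.Adj (c i) (c (i + 1))) (i m : ℕ) :
    (arc hc i m).length = m := by
  induction m with
  | zero => rfl
  | succ m ih => rw [arc, Walk.length_concat, ih]

theorem mem_support_arc {c : ℕ → V} (hc : ∀ i, G.Adj (c i) (c (i + 1))) {i m : ℕ} {w : V}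
    (hw : w ∈ (arc hc i m).support) : ∃ j ≤ m, w = c (i + j) := by
  induction m with
  | zero => exact ⟨0, le_rfl, by simpa [arc] using hw⟩
  | succ m ih =>
    rw [arc, Walk.support_concat, List.mem_append, List.mem_singleton] at hw
    rcases hw with h | h
    · obtain ⟨j, hj, h⟩ := ih h
      exact ⟨j, by omega, h⟩
    · exact ⟨m + 1, le_rfl, h⟩

namespace IsShortestCycle

variable {c : ℕ → V}

theorem ne (hc : IsShortestCycle G c) {i j : ℕ} (h : i < j) (h' : j < i + G.girth) :
    c i ≠ c j := by
  intro he
  have := (Nat.modEq_iff_dvd' h.le).1 ((hc.eq_iff i j).1 he)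
  have := Nat.le_of_dvd (by omega) this
  omega

theorem add_girth (hc : IsShortestCycle G c) (i : ℕ) : c (i + G.girth) = c i :=
  (hc.eq_iff _ _).2 (by simp [Nat.ModEq])

theorem shift (hc : IsShortestCycle G c) (s : ℕ) : IsShortestCycle G fun i => c (s + i) where
  adj i := hc.adj (s + i)
  eq_iff i j := by
    rw [hc.eq_iff]
    exact ⟨Nat.ModEq.add_left_cancel' s, Nat.ModEq.add_left s⟩

theorem isPath_arc (hc : IsShortestCycle G c) (i : ℕ) {m : ℕ} (hm : m < G.girth) :
    (arc hc.adj i m).IsPath := by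
  induction m with
  | zero => exact Walk.IsPath.nil
  | succ m ih =>
    refine (ih (by omega)).concat (fun h => ?_) _
    obtain ⟨j, hj, h⟩ := mem_support_arc _ h
    exact hc.ne (by omega) (by omega) h.symm

theorem dist_eq (hc : IsShortestCycle G c) (hconn : G.Connected) (hg : 0 < G.girth) (i : ℕ) {m : ℕ}
    (hm : 2 * m ≤ G.girth) : G.dist (c i) (c (i + m)) = m := by
  have := length_eq_dist_of_two_mul_le_girth hconn (hc.isPath_arc i (m := m) (by omega))
    (by simpa using hm)
  simpa using this.symm

theorem dist_eq_of_adj_right (hc : IsShortestCycle G c) (hconn : G.Connected) {i m : ℕ} {w : V}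
    (hm : 2 * (m + 1) ≤ G.girth) (hw : G.Adj (c (i + m)) w) (hwc : ∀ j, c j ≠ w) :
    G.dist (c i) w = m + 1 := by
  have hp : ((arc hc.adj i m).concat hw).IsPath := by
    refine (hc.isPath_arc i (by omega)).concat (fun h => ?_) _
    obtain ⟨j, -, h⟩ := mem_support_arc _ h
    exact hwc _ h.symm
  have := length_eq_dist_of_two_mul_le_girth hconn hp (by simpa using hm)
  simpa using this.symm

theorem dist_eq_of_adj_left (hc : IsShortestCycle G c) (hconn : G.Connected) {i m : ℕ} {w : V}
    (hm : 2 * (m + 1) ≤ G.girth) (hw : G.Adj (c i) w) (hwc : ∀ j, c j ≠ w) :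
    G.dist w (c (i + m)) = m + 1 := by
  have hp : (Walk.cons hw.symm (arc hc.adj i m)).IsPath := by
    refine (hc.isPath_arc i (by omega)).cons (fun h => ?_)
    obtain ⟨j, -, h⟩ := mem_support_arc _ h
    exact hwc _ h.symm
  have := length_eq_dist_of_two_mul_le_girth hconn hp (by simpa using hm)
  simpa using this.symm

theorem visiblePair_arc (hc : IsShortestCycle G c) (hconn : G.Connected) {X : Set V} (i : ℕ)
    {m : ℕ} (hg : 0 < G.girth) (hm : 2 * m ≤ G.girth)
    (hX : ∀ j, 0 < j → j < m → c (i + j) ∉ X) : VisiblePair G X (c i) (c (i + m)) := by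
  refine ⟨arc hc.adj i m, hc.isPath_arc i (by omega), ?_, fun w hw hwX => ?_⟩
  · rw [length_arc, hc.dist_eq hconn hg i hm]
  · obtain ⟨j, hj, rfl⟩ := mem_support_arc _ hw
    rcases Nat.eq_zero_or_pos j with rfl | h0
    · exact Or.inl rfl
    · rcases hj.lt_or_eq with h | rfl
      · exact absurd hwX (hX j h0 h)
      · exact Or.inr rfl

/-- Every connected triangle-free graph with a cycle has a mutual-visibility triple. -/
theorem exists_isMVSet_three (hc : IsShortestCycle G c) (hconn : G.Connected)
    (hg : 4 ≤ G.girth) : ∃ X, IsMVSet G X ∧ X.ncard = 3 := by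
  obtain ⟨h, hh⟩ : ∃ h, h = G.girth / 2 := ⟨_, rfl⟩
  obtain ⟨k, hk⟩ : ∃ k, k = G.girth - 1 - h := ⟨_, rfl⟩
  have e : c (h + k + 2) = c 1 := by
    rw [show h + k + 2 = 1 + G.girth by omega, hc.add_girth]
  have n1 : c 1 ≠ c h := hc.ne (by omega) (by omega)
  have n2 : c 1 ≠ c (h + k) := hc.ne (by omega) (by omega)
  have n3 : c h ≠ c (h + k) := hc.ne (by omega) (by omega)
  have v1 : VisiblePair G {c 1, c h, c (h + k)} (c 1) (c h) := by
    have := hc.visiblePair_arc hconn (X := {c 1, c h, c (h + k)}) 1 (m := h - 1) (by omega)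
      (by omega) ?_
    · rwa [show 1 + (h - 1) = h by omega] at this
    · rintro j h1 h2 (he | he | he)
      · exact hc.ne (by omega) (by omega) he.symm
      · exact hc.ne (by omega) (by omega) he
      · exact hc.ne (by omega) (by omega) he
  have v2 : VisiblePair G {c 1, c h, c (h + k)} (c h) (c (h + k)) := by
    refine hc.visiblePair_arc hconn h (by omega) (by omega) ?_
    rintro j h1 h2 (he | he | he)
    · exact hc.ne (by omega) (by omega) he.symm
    · exact hc.ne (by omega) (by omega) he.symm
    · exact hc.ne (by omega) (by omega) he
  have v3 : VisiblePair G {c 1, c h, c (h + k)} (c (h + k)) (c 1) := by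
    rw [← e]
    refine hc.visiblePair_arc hconn (h + k) (by omega) (by omega) ?_
    rintro j h1 h2 (he | he | he)
    · exact hc.ne (by omega) (by omega) he
    · exact hc.ne (by omega) (by omega) he.symm
    · exact hc.ne (by omega) (by omega) he.symm
  refine ⟨{c 1, c h, c (h + k)}, ?_, ?_⟩
  · rintro u (rfl | rfl | rfl) v (rfl | rfl | rfl) huv <;>
    first
    | exact absurd rfl huv
    | assumption
    | (apply VisiblePair.symm; assumption)
  · rw [Set.ncard_insert_of_notMem (by simp [n1, n2]), Set.ncard_pair n3]

end IsShortestCycle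

/-! ### Attachments of a shortest cycle -/

/-- The cycle vertex `c i` has a neighbour outside the cycle. -/
def Attached (G : SimpleGraph V) (c : ℕ → V) (i : ℕ) : Prop :=
  ∃ w, G.Adj (c i) w ∧ ∀ j, c j ≠ w

namespace IsShortestCycle

variable {c : ℕ → V}

theorem not_attached_of_attached (hc : IsShortestCycle G c) (hconn : G.Connected)
    (htf : G.CliqueFree 3) (hg : 4 ≤ G.girth) (hno : ¬ ∃ X, IsMVSet G X ∧ X.ncard = 4)
    {i m : ℕ} (hm : 1 ≤ m) (hm' : 2 * (m + 1) ≤ G.girth) (hi : Attached G c (i + 1)) :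
    ¬ Attached G c (i + 1 + m) := by
  rintro ⟨w₂, h₂, hw₂⟩
  obtain ⟨w₁, h₁, hw₁⟩ := hi
  have duv := hc.dist_eq hconn (by omega) (i + 1) (m := m) (by omega)
  have d₁ := hc.dist_eq_of_adj_left hconn hm' h₁ hw₁
  have d₂ := hc.dist_eq_of_adj_right hconn hm' h₂ hw₂
  have d₃ := hc.dist_eq hconn (by omega) i hm'
  have d₄ := hc.dist_eq hconn (by omega) (i + 1) hm'
  refine hno (exists_isMVSet_four_of_double_broom hconn htf h₁ (hc.adj i).symm h₂
    (hc.adj (i + 1 + m)) (hw₁ _).symm (hw₂ _).symm ?_ (hw₁ _).symm (hw₂ _)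
    (hc.ne (by omega) (by omega)) ?_ ?_ ?_ ?_)
  · rintro rfl
    have := dist_eq_one_iff_adj.2 h₂
    rw [G.dist_comm] at this
    omega
  · rw [d₁, duv]
  · rw [duv, ← d₃]
    congr 2
    omega
  · rw [G.dist_comm, d₂, duv]
  · rw [duv, G.dist_comm]
    exact d₄

theorem attached_add_girth (hc : IsShortestCycle G c) {i : ℕ} :
    Attached G c (i + G.girth) ↔ Attached G c i := by
  rw [Attached, hc.add_girth, Attached]

theorem range_shift (hc : IsShortestCycle G c) (hg : 0 < G.girth) (s : ℕ) {w : V} :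
    (∀ j, c (s + j) ≠ w) ↔ ∀ j, c j ≠ w := by
  refine ⟨fun h j => ?_, fun h j => h _⟩
  rintro rfl
  refine h (j + s * (G.girth - 1)) ((hc.eq_iff _ _).2 ?_)
  obtain ⟨k, hk⟩ := Nat.exists_eq_add_of_le (show 1 ≤ G.girth from hg)
  rw [hk, Nat.add_sub_cancel_left, Nat.ModEq, show s + (j + s * k) = j + s * (1 + k) by ring,
    Nat.add_mul_mod_self_right]

theorem attached_shift (hc : IsShortestCycle G c) (hg : 0 < G.girth) (s i : ℕ) :
    Attached G (fun i => c (s + i)) i ↔ Attached G c (s + i) := by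
  simp only [Attached, hc.range_shift hg]

theorem two_mul_mem_of_attached (hc : IsShortestCycle G c) (hconn : G.Connected)
    (htf : G.CliqueFree 3) (hg : 4 ≤ G.girth) (hno : ¬ ∃ X, IsMVSet G X ∧ X.ncard = 4)
    {i j : ℕ} (hij : i < j) (hj : j < i + G.girth) (hi : Attached G c i) (hj' : Attached G c j) :
    G.girth < 2 * (j - i) + 2 ∧ 2 * (j - i) < G.girth + 2 := by
  rw [← hc.attached_add_girth] at hi hj'
  constructor
  · by_contra! h
    refine hc.not_attached_of_attached hconn htf hg hno (i := i + G.girth - 1) (m := j - i)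
      (by omega) (by omega) ?_ ?_
    · rwa [show i + G.girth - 1 + 1 = i + G.girth by omega]
    · rwa [show i + G.girth - 1 + 1 + (j - i) = j + G.girth by omega]
  · by_contra! h
    rw [← hc.attached_add_girth] at hi
    refine hc.not_attached_of_attached hconn htf hg hno (i := j + G.girth - 1)
      (m := i + G.girth - j) (by omega) (by omega) ?_ ?_
    · rwa [show j + G.girth - 1 + 1 = j + G.girth by omega]
    · rwa [show j + G.girth - 1 + 1 + (i + G.girth - j) = i + G.girth + G.girth by omega]

/-- A cycle of length `girth` can be numbered so that all attachments are at `0` or `girth / 2`. -/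
theorem exists_attached_imp (hc : IsShortestCycle G c) (hconn : G.Connected)
    (htf : G.CliqueFree 3) (hg : 4 ≤ G.girth) (hno : ¬ ∃ X, IsMVSet G X ∧ X.ncard = 4) :
    ∃ c', IsShortestCycle G c' ∧
      ∀ i < G.girth, Attached G c' i → i = 0 ∨ i = G.girth / 2 := by
  by_cases h0 : ∃ i, Attached G c i
  swap
  · exact ⟨c, hc, fun i _ hi => absurd ⟨i, hi⟩ h0⟩
  obtain ⟨s, hs⟩ := h0
  have key : ∀ s, Attached G c s → ∀ i < G.girth, i ≠ 0 →
      Attached G (fun i => c (s + i)) i → G.girth < 2 * i + 2 ∧ 2 * i < G.girth + 2 := by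
    intro s hs i hi hi0 h
    rw [hc.attached_shift (by omega)] at h
    have := hc.two_mul_mem_of_attached hconn htf hg hno (by omega) (by omega) hs h
    omega
  by_cases h1 : Attached G c (s + (G.girth + 1) / 2)
  · refine ⟨_, hc.shift (s + (G.girth + 1) / 2), fun i hi h => ?_⟩
    by_contra! hne
    have := key _ h1 i hi hne.1 h
    rw [hc.attached_shift (by omega)] at h
    have := hc.two_mul_mem_of_attached hconn htf hg hno (i := s + G.girth)
      (j := s + (G.girth + 1) / 2 + i) (by omega) (by omega) (hc.attached_add_girth.2 hs) h
    omega
  · refine ⟨_, hc.shift s, fun i hi h => ?_⟩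
    by_contra! hne
    have := key _ hs i hi hne.1 h
    rw [hc.attached_shift (by omega)] at h
    rw [show i = (G.girth + 1) / 2 by omega] at h
    exact h1 h

theorem exists_lt_girth (hc : IsShortestCycle G c) (hg : 0 < G.girth) (i : ℕ) :
    ∃ j < G.girth, c j = c i :=
  ⟨i % G.girth, Nat.mod_lt _ hg, (hc.eq_iff _ _).2 (Nat.mod_modEq _ _)⟩

end IsShortestCycle

/-! ### Edges outside the cycle -/

/-- `G` without the edges inside `C`. -/
def outside (G : SimpleGraph V) (C : Set V) : SimpleGraph V where
  Adj x y := G.Adj x y ∧ ¬ (x ∈ C ∧ y ∈ C)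
  symm := ⟨fun _ _ h => ⟨h.1.symm, fun h' => h.2 h'.symm⟩⟩
  loopless := ⟨fun _ h => h.1.ne rfl⟩

theorem outside_le (G : SimpleGraph V) (C : Set V) : outside G C ≤ G := fun _ _ h => h.1

namespace IsShortestCycle

variable {c : ℕ → V}

theorem eq_of_outside_adj (hc : IsShortestCycle G c) (hg : 0 < G.girth)
    (hatt : ∀ i < G.girth, Attached G c i → i = 0 ∨ i = G.girth / 2) {x y : V}
    (hx : x ∈ Set.range c) (h : (outside G (Set.range c)).Adj x y) :
    x = c 0 ∨ x = c (G.girth / 2) := by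
  obtain ⟨i, rfl⟩ := hx
  obtain ⟨j, hj, hji⟩ := hc.exists_lt_girth hg i
  rw [← hji] at h ⊢
  rcases hatt j hj ⟨y, h.1, fun k hk => h.2 ⟨⟨j, rfl⟩, ⟨k, hk⟩⟩⟩ with rfl | rfl <;> simp

theorem eq_of_outside_reachable (hc : IsShortestCycle G c) (hg : 0 < G.girth)
    (hatt : ∀ i < G.girth, Attached G c i → i = 0 ∨ i = G.girth / 2) {x y : V}
    (hx : x ∈ Set.range c) (hxy : x ≠ y) (h : (outside G (Set.range c)).Reachable x y) :
    x = c 0 ∨ x = c (G.girth / 2) := by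
  obtain ⟨p⟩ := h
  cases p with
  | nil => exact absurd rfl hxy
  | cons h _ => exact hc.eq_of_outside_adj hg hatt hx h

theorem outside_dist_le_or (hc : IsShortestCycle G c) (hconn : G.Connected) (hg : 0 < G.girth)
    (hatt : ∀ i < G.girth, Attached G c i → i = 0 ∨ i = G.girth / 2) {x z : V}
    (hz : z ∉ Set.range c) (p : G.Walk x z) :
    ((outside G (Set.range c)).Reachable x z ∧ (outside G (Set.range c)).dist x z ≤ p.length) ∨
      G.dist x (c 0) + (outside G (Set.range c)).dist (c 0) z ≤ p.length ∨
      G.dist x (c (G.girth / 2)) + (outside G (Set.range c)).dist (c (G.girth / 2)) z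
        ≤ p.length := by
  induction p with
  | nil => exact Or.inl ⟨Reachable.refl _, by simp⟩
  | @cons x y z h p ih =>
    have h0 := h.dist_le_dist_add_one hconn (c 0)
    have h1 := h.dist_le_dist_add_one hconn (c (G.girth / 2))
    rw [Walk.length_cons]
    rcases ih hz with ⟨hr, hd⟩ | hd | hd
    · by_cases hH : (outside G (Set.range c)).Adj x y
      · refine Or.inl ⟨hH.reachable.trans hr, ?_⟩
        obtain ⟨q, hq⟩ := hr.exists_walk_length_eq_dist
        have := dist_le (Walk.cons hH q)
        rw [Walk.length_cons] at this
        omega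
      · have hy : y ∈ Set.range c := by
          by_contra hy
          exact hH ⟨h, fun h' => hy h'.2⟩
        have := dist_eq_one_iff_adj.2 h
        rcases hc.eq_of_outside_reachable hg hatt hy (by rintro rfl; exact hz hy) hr with rfl | rfl
        · right; left; omega
        · right; right; omega
    · right; left; omega
    · right; right; omega

/-- The two attachment vertices are not joined outside the cycle. -/
theorem not_outside_reachable (hc : IsShortestCycle G c) (hconn : G.Connected)
    (hg : 4 ≤ G.girth) (hno : ¬ ∃ X, IsMVSet G X ∧ X.ncard = 4)
    (hatt : ∀ i < G.girth, Attached G c i → i = 0 ∨ i = G.girth / 2) :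
    ¬ (outside G (Set.range c)).Reachable (c 0) (c (G.girth / 2)) := by
  classical
  intro hr
  set H := outside G (Set.range c) with hH
  obtain ⟨p, hp⟩ : ∃ p, G.girth / 2 = p + 1 := ⟨G.girth / 2 - 1, by omega⟩
  have hg0 : 0 < G.girth := by omega
  rw [hp] at hr
  obtain ⟨P, hP⟩ := hr.exists_walk_length_eq_dist
  have hrp : p + 1 ≤ P.length := by
    have h1 := G.dist_le (P.mapLe (outside_le G _))
    have h2 := hc.dist_eq hconn hg0 0 (m := p + 1) (by omega)
    rw [zero_add] at h2
    rwa [h2, Walk.length_map] at h1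
  obtain ⟨t, s, z, A, B, hts, hst, hs, hA, hB, hsum⟩ : ∃ (t s : ℕ) (z : V) (A : H.Walk (c 0) z)
      (B : H.Walk z (c (p + 1))), t ≤ s + 1 ∧ s ≤ t ∧ 1 ≤ s ∧ A.length = t ∧ B.length = s ∧
        t + s = P.length := by
    refine ⟨(P.length + 1) / 2, P.length - (P.length + 1) / 2, P.getVert ((P.length + 1) / 2),
      P.take _, P.drop _, by omega, by omega, by omega, ?_, ?_, by omega⟩
    · rw [Walk.take_length]
      omega
    · rw [Walk.drop_length]
  have dA : H.dist (c 0) z = t := by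
    obtain ⟨A', hA'⟩ := A.reachable.exists_walk_length_eq_dist
    have h1 := dist_le A
    have h2 := dist_le (A'.append B)
    rw [Walk.length_append] at h2
    omega
  have dB : H.dist (c (p + 1)) z = s := by
    obtain ⟨B', hB'⟩ := B.reachable.exists_walk_length_eq_dist
    have h1 := dist_le B
    have h2 := dist_le (A.append B')
    rw [Walk.length_append] at h2
    rw [H.dist_comm]
    omega
  have hz : z ∉ Set.range c := by
    intro hz
    have h0 : z ≠ c 0 := by
      rintro rfl
      rw [SimpleGraph.dist_self] at dA
      omega
    have h1 : z ≠ c (p + 1) := by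
      rintro rfl
      rw [SimpleGraph.dist_self] at dB
      omega
    rcases hc.eq_of_outside_reachable hg0 hatt hz h0 A.reachable.symm with h | h
    · exact h0 h
    · exact h1 (hp ▸ h)
  have lower : ∀ x, (H.Reachable x z ∧ H.dist x z ≤ G.dist x z) ∨
      G.dist x (c 0) + t ≤ G.dist x z ∨ G.dist x (c (p + 1)) + s ≤ G.dist x z := by
    intro x
    obtain ⟨q, hq⟩ := hconn.exists_walk_length_eq_dist x z
    have := hc.outside_dist_le_or hconn hg0 hatt hz q
    rwa [hp, hq, ← hH, dA, dB] at this
  have e0 : c G.girth = c 0 := by simpa using hc.add_girth 0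
  have n01 : c 0 ≠ c p := hc.ne (by omega) (by omega)
  have n0q : c 0 ≠ c (p + 1) := hc.ne (by omega) (by omega)
  have n02 : c 0 ≠ c (p + 2) := hc.ne (by omega) (by omega)
  have n12 : c p ≠ c (p + 2) := hc.ne (by omega) (by omega)
  have n1q : c p ≠ c (p + 1) := hc.ne (by omega) (by omega)
  have n2q : c (p + 2) ≠ c (p + 1) := (hc.ne (by omega) (by omega)).symm
  have nz : ∀ i, c i ≠ z := fun i h => hz ⟨i, h⟩
  have isolated : ∀ i, c i ≠ c 0 → c i ≠ c (p + 1) → ¬ H.Reachable (c i) z := by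
    intro i h0 h1 h
    rcases hc.eq_of_outside_reachable hg0 hatt ⟨i, rfl⟩ (nz i) h with h | h
    · exact h0 h
    · exact h1 (hp ▸ h)
  have l0 : t ≤ G.dist (c 0) z := by
    have := hconn.pos_dist_of_ne n0q
    rcases lower (c 0) with ⟨-, h⟩ | h | h <;> omega
  have far : ∀ i, c i ≠ c 0 → c i ≠ c (p + 1) → s + 1 ≤ G.dist (c i) z := by
    intro i h0 h1
    have h2 := hconn.pos_dist_of_ne h0
    have h3 := hconn.pos_dist_of_ne h1
    rcases lower (c i) with ⟨h, -⟩ | h | h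
    · exact absurd h (isolated i h0 h1)
    all_goals omega
  have l1 := far p n01.symm n1q
  have l2 := far (p + 2) n02.symm n2q
  have d01 := hconn.pos_dist_of_ne n01
  have d02 := hconn.pos_dist_of_ne n02
  have d12 := hconn.pos_dist_of_ne n12
  have c01 := G.dist_comm (u := c 0) (v := c p)
  have c02 := G.dist_comm (u := c 0) (v := c (p + 2))
  have c12 := G.dist_comm (u := c p) (v := c (p + 2))
  have hX : ∀ x, x ∈ ({c 0, c p, c (p + 2), z} : Set V) ↔
      x = c 0 ∨ x = c p ∨ x = c (p + 2) ∨ x = z := by simp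
  obtain ⟨X, hXe⟩ : ∃ X : Set V, X = {c 0, c p, c (p + 2), z} := ⟨_, rfl⟩
  rw [← hXe] at hX
  have hqX : c (p + 1) ∉ X := by
    rw [hX]
    rintro (h | h | h | h)
    exacts [n0q h.symm, n1q h.symm, n2q h.symm, nz _ h]
  have hvis : ∀ x, G.Adj (c (p + 1)) x → x = c p ∨ x = c (p + 2) → VisiblePair G X x z := by
    intro x hx hx'
    refine visiblePair_of_walk hconn (Walk.cons hx.symm (B.reverse.mapLe (outside_le G _))) ?_ ?_
    · intro w hw hwX
      rw [Walk.support_cons, List.mem_cons, Walk.support_mapLe_eq_support, Walk.support_reverse,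
        List.mem_reverse] at hw
      rcases hw with hw | hw
      · exact Or.inl hw
      · have hrw : H.Reachable w z := ⟨(B.takeUntil w hw).reverse⟩
        rcases (hX w).1 hwX with rfl | rfl | rfl | rfl
        · have := B.dist_add_dist_le_length hw
          rw [H.dist_comm, dA] at this
          have h2 : 0 < H.dist (c 0) (c (p + 1)) := by omega
          omega
        · exact absurd hrw (isolated _ n01.symm n1q)
        · exact absurd hrw (isolated _ n02.symm n2q)
        · exact Or.inr rfl
    · intro y hy h1 h2
      rw [Walk.length_cons, Walk.length_map, Walk.length_reverse, hB]
      rcases (hX y).1 hy with rfl | rfl | rfl | rfl <;> rcases hx' with rfl | rfl <;>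
        first
        | exact absurd rfl h1
        | exact absurd rfl h2
        | omega
  refine hno ⟨X, isMVSet_four hXe ?_ ?_ ?_ ?_ ?_ ?_, ?_⟩
  · have := hc.visiblePair_arc hconn (X := X) 0 (m := p) hg0 (by omega) ?_
    · rwa [zero_add] at this
    · intro j h1 h2
      rw [zero_add, hX]
      rintro (h | h | h | h)
      exacts [hc.ne (by omega) (by omega) h.symm, hc.ne (by omega) (by omega) h,
        hc.ne (by omega) (by omega) h, nz _ h]
  · have := hc.visiblePair_arc hconn (X := X) (p + 2) (m := G.girth - (p + 2)) hg0 (by omega) ?_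
    · rw [show p + 2 + (G.girth - (p + 2)) = G.girth by omega, e0] at this
      exact this.symm
    · intro j h1 h2
      rw [hX, ← e0]
      rintro (h | h | h | h)
      exacts [hc.ne (by omega) (by omega) h, hc.ne (by omega) (by omega) h.symm,
        hc.ne (by omega) (by omega) h.symm, nz _ h]
  · refine visiblePair_of_walk hconn (A.mapLe (outside_le G _)) ?_ ?_
    · intro w hw hwX
      rw [Walk.support_mapLe_eq_support] at hw
      have hrw : H.Reachable w z := ⟨A.dropUntil w hw⟩
      rcases (hX w).1 hwX with rfl | rfl | rfl | rfl
      · exact Or.inl rfl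
      · exact absurd hrw (isolated _ n01.symm n1q)
      · exact absurd hrw (isolated _ n02.symm n2q)
      · exact Or.inr rfl
    · intro y hy h1 h2
      rw [Walk.length_map, hA]
      rcases (hX y).1 hy with rfl | rfl | rfl | rfl <;>
        first
        | exact absurd rfl h1
        | exact absurd rfl h2
        | omega
  · exact visiblePair_of_common_neighbor hconn (hc.adj p).symm (hc.adj (p + 1)) hqX
  · exact hvis _ (hc.adj p).symm (Or.inl rfl)
  · exact hvis _ (hc.adj (p + 1)) (Or.inr rfl)
  · rw [hXe, Set.ncard_insert_of_notMem (by simp [n01, n02, nz]),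
      Set.ncard_insert_of_notMem (by simp [n12, nz]), Set.ncard_pair (nz _)]

end IsShortestCycle

/-! ### Tails -/

/-- A set of vertices that can be left only through `u`. -/
structure IsTail (G : SimpleGraph V) (u : V) (T : Set V) : Prop where
  notMem : u ∉ T
  adj : ∀ x ∈ T, ∀ y, G.Adj x y → y ∈ T ∨ y = u

namespace IsTail

variable {u : V} {T : Set V}

theorem mem_support (hT : IsTail G u T) {z y : V} (hz : z ∈ T ∨ z = u) (hy : y ∉ T)
    (p : G.Walk z y) : u ∈ p.support := by
  induction p with
  | nil => simp [(hz.resolve_left hy)]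
  | @cons x y z h p ih =>
    rcases hz with hz | rfl
    · exact List.mem_cons_of_mem _ (ih (hT.adj _ hz _ h) hy)
    · exact Walk.start_mem_support _

theorem dist_eq (hT : IsTail G u T) (hconn : G.Connected) {z y : V} (hz : z ∈ T ∨ z = u)
    (hy : y ∉ T) : G.dist y z = G.dist u z + G.dist y u := by
  obtain ⟨p, hp⟩ := hconn.exists_walk_length_eq_dist z y
  have h1 := p.dist_add_dist_le_length (hT.mem_support hz hy p)
  have h2 := hconn.dist_triangle (u := z) (v := u) (w := y)
  rw [G.dist_comm, G.dist_comm (u := u), G.dist_comm (u := y)]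
  omega

theorem exists_pred (hT : IsTail G u T) (hconn : G.Connected) {x : V} (hx : x ∈ T) :
    ∃ y, G.Adj y x ∧ (y ∈ T ∨ y = u) ∧ G.dist u x = G.dist u y + 1 := by
  obtain ⟨p, hp⟩ := hconn.exists_walk_length_eq_dist x u
  cases p with
  | nil => exact absurd hx hT.notMem
  | @cons _ y _ h p =>
    refine ⟨y, h.symm, hT.adj _ hx _ h, ?_⟩
    have h1 := h.dist_le_dist_add_one hconn u
    have h2 := dist_le p
    rw [Walk.length_cons] at hp
    rw [G.dist_comm, G.dist_comm (u := u)]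
    omega

variable {a₁ a₂ : V}

theorem dist_injOn (hT : IsTail G u T) (hconn : G.Connected) (htf : G.CliqueFree 3)
    (hno : ¬ ∃ X, IsMVSet G X ∧ X.ncard = 4) (h₁ : G.Adj u a₁) (h₂ : G.Adj u a₂)
    (hne : a₁ ≠ a₂) (ht₁ : a₁ ∉ T) (ht₂ : a₂ ∉ T) : Set.InjOn (G.dist u) T := by
  suffices h : ∀ n, ∀ x ∈ T, ∀ y ∈ T, G.dist u x = n → G.dist u y = n → x = y from
    fun x hx y hy hxy => h _ x hx y hy rfl hxy.symm
  intro n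
  induction n with
  | zero =>
    intro x hx y hy h _
    rw [hconn.dist_eq_zero_iff] at h
    exact absurd (h ▸ hx) hT.notMem
  | succ n ih =>
    intro x hx y hy hxn hyn
    obtain ⟨x', hx', hxT, hxd⟩ := hT.exists_pred hconn hx
    obtain ⟨y', hy', hyT, hyd⟩ := hT.exists_pred hconn hy
    have e : x' = y' := by
      rcases Nat.eq_zero_or_pos n with rfl | h0
      · rw [← hconn.dist_eq_zero_iff.1 (show G.dist u x' = 0 by omega),
          ← hconn.dist_eq_zero_iff.1 (show G.dist u y' = 0 by omega)]
      · have hu : ∀ w, G.dist u w = n → w ≠ u := by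
          rintro w hw rfl
          rw [SimpleGraph.dist_self] at hw
          omega
        exact ih x' (hxT.resolve_right (hu _ (by omega))) y' (hyT.resolve_right (hu _ (by omega)))
          (by omega) (by omega)
    subst e
    by_contra hxy
    have d₁ := hT.dist_eq hconn hxT ht₁
    have d₂ := hT.dist_eq hconn hxT ht₂
    have e₁ := dist_eq_one_iff_adj.2 h₁.symm
    have e₂ := dist_eq_one_iff_adj.2 h₂.symm
    refine hno (exists_isMVSet_four_of_double_broom hconn htf h₁ h₂ hx' hy' hne hxy
      (fun h => ht₁ (h ▸ hx)) (fun h => ht₁ (h ▸ hy)) (fun h => ht₂ (h ▸ hx))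
      (fun h => ht₂ (h ▸ hy)) ?_ ?_ ?_ ?_)
    · omega
    · omega
    · rw [G.dist_comm, hxd]
    · rw [G.dist_comm, hyd]

/-- A tail at a vertex with two further neighbours is a path. -/
theorem exists_enumeration [Finite V] (hT : IsTail G u T) (hconn : G.Connected)
    (hinj : Set.InjOn (G.dist u) T) :
    ∃ (a : ℕ) (e : Fin a → V), Function.Injective e ∧ Set.range e = T ∧
      (∀ i j, G.Adj (e i) (e j) ↔ (j : ℕ) = i + 1 ∨ (i : ℕ) = j + 1) ∧
      ∀ i, G.Adj u (e i) ↔ (i : ℕ) = 0 := by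
  have hpos : ∀ x ∈ T, 0 < G.dist u x := fun x hx =>
    hconn.pos_dist_of_ne fun h => hT.notMem (h ▸ hx)
  have down : ∀ k n, 1 ≤ n → n + k ∈ G.dist u '' T → n ∈ G.dist u '' T := by
    intro k
    induction k with
    | zero => exact fun n _ h => h
    | succ k ih =>
      rintro n hn ⟨x, hx, hd⟩
      obtain ⟨y, -, hy, hyd⟩ := hT.exists_pred hconn hx
      refine ih n hn ⟨y, hy.resolve_right ?_, by omega⟩
      rintro rfl
      rw [SimpleGraph.dist_self] at hyd
      omega
  have hcard : (G.dist u '' T).ncard = T.ncard := hinj.ncard_image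
  have hle : ∀ x ∈ T, G.dist u x ≤ T.ncard := by
    intro x hx
    have : Set.Icc 1 (G.dist u x) ⊆ G.dist u '' T := by
      rintro n ⟨h1, h2⟩
      exact down (G.dist u x - n) n h1 ⟨x, hx, by omega⟩
    have := Set.ncard_le_ncard this (Set.toFinite _)
    rw [hcard, Set.ncard_eq_toFinset_card'] at this
    simpa using this
  have hex : ∀ i : Fin T.ncard, ∃ x ∈ T, G.dist u x = i + 1 := by
    intro i
    by_contra hi
    have : G.dist u '' T ⊆ Set.Icc 1 (i : ℕ) := by
      rintro _ ⟨x, hx, rfl⟩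
      refine ⟨hpos x hx, ?_⟩
      by_contra! h
      exact hi (down (G.dist u x - (i + 1)) (i + 1) (by omega) ⟨x, hx, by omega⟩)
    have := Set.ncard_le_ncard this (Set.toFinite _)
    rw [hcard, Set.ncard_eq_toFinset_card' (Set.Icc _ _)] at this
    simp at this
    omega
  choose e heT hed using hex
  have hsucc : ∀ x ∈ T, ∀ y ∈ T, G.dist u y = G.dist u x + 1 → G.Adj x y := by
    intro x hx y hy hd
    obtain ⟨y', hy', hyT, hyd⟩ := hT.exists_pred hconn hy
    have := hpos x hx
    have : y' ∈ T := hyT.resolve_right (by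
      rintro rfl
      rw [SimpleGraph.dist_self] at hyd
      omega)
    rwa [← hinj this hx (by omega)]
  refine ⟨T.ncard, e, ?_, ?_, ?_, ?_⟩
  · intro i j h
    have := hed i
    rw [h, hed j] at this
    exact Fin.ext (by omega)
  · ext x
    constructor
    · rintro ⟨i, rfl⟩
      exact heT i
    · intro hx
      have h1 := hpos x hx
      have h2 := hle x hx
      refine ⟨⟨G.dist u x - 1, by omega⟩, hinj (heT _) hx ?_⟩
      rw [hed]
      simp only
      omega
  · intro i j
    have hi := hed i
    have hj := hed j
    constructor
    · intro h
      have h1 := h.dist_le_dist_add_one hconn u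
      have h2 := h.symm.dist_le_dist_add_one hconn u
      rw [G.dist_comm (u := e i), G.dist_comm (u := e j)] at h1 h2
      have : (i : ℕ) ≠ j := fun h' => h.ne (hinj (heT i) (heT j) (by omega))
      omega
    · rintro (h | h)
      · exact hsucc _ (heT i) _ (heT j) (by omega)
      · exact (hsucc _ (heT j) _ (heT i) (by omega)).symm
  · intro i
    rw [← dist_eq_one_iff_adj, hed]
    omega

end IsTail

/-! ### Recognizing frog graphs -/

section FrogAdj

variable {n a b : ℕ}

theorem frogGraph_adj_cycle (hn : 2 ≤ n) {i j : Fin n} :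
    (frogGraph n a b).Adj (Sum.inl i) (Sum.inl j) ↔
      (j : ℕ) = (i + 1) % n ∨ (i : ℕ) = (j + 1) % n := by
  have h : ∀ k : Fin n, (k : ℕ) ≠ (k + 1) % n := by
    intro k h
    have := k.2
    rcases Nat.lt_or_ge (k + 1) n with h1 | h1
    · rw [Nat.mod_eq_of_lt h1] at h
      omega
    · rw [show (k : ℕ) + 1 = n by omega, Nat.mod_self] at h
      omega
  simp only [frogGraph, fromRel_adj, ne_eq, Sum.inl.injEq, and_iff_right_iff_imp]
  rintro (h1 | h1) rfl <;> exact h _ h1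

theorem frogGraph_adj_cycle_fst {i : Fin n} {k : Fin a} :
    (frogGraph n a b).Adj (Sum.inl i) (Sum.inr (Sum.inl k)) ↔ (i : ℕ) = 0 ∧ (k : ℕ) = 0 := by
  simp [frogGraph]

theorem frogGraph_adj_cycle_snd {i : Fin n} {k : Fin b} :
    (frogGraph n a b).Adj (Sum.inl i) (Sum.inr (Sum.inr k)) ↔ (i : ℕ) = n / 2 ∧ (k : ℕ) = 0 := by
  simp [frogGraph]

theorem frogGraph_adj_fst {k l : Fin a} :
    (frogGraph n a b).Adj (Sum.inr (Sum.inl k)) (Sum.inr (Sum.inl l)) ↔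
      (l : ℕ) = k + 1 ∨ (k : ℕ) = l + 1 := by
  simp [frogGraph]
  omega

theorem frogGraph_adj_snd {k l : Fin b} :
    (frogGraph n a b).Adj (Sum.inr (Sum.inr k)) (Sum.inr (Sum.inr l)) ↔
      (l : ℕ) = k + 1 ∨ (k : ℕ) = l + 1 := by
  simp [frogGraph]
  omega

theorem not_frogGraph_adj_fst_snd {k : Fin a} {l : Fin b} :
    ¬ (frogGraph n a b).Adj (Sum.inr (Sum.inl k)) (Sum.inr (Sum.inr l)) := by
  simp [frogGraph]

end FrogAdj

namespace IsShortestCycle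

variable {c : ℕ → V}

theorem adj_iff (hc : IsShortestCycle G c) (hconn : G.Connected) (hg : 3 ≤ G.girth) {i j : ℕ}
    (hi : i < G.girth) (hj : j < G.girth) :
    G.Adj (c i) (c j) ↔ j = (i + 1) % G.girth ∨ i = (j + 1) % G.girth := by
  have e : ∀ k < G.girth, c ((k + 1) % G.girth) = c (k + 1) := fun k _ =>
    (hc.eq_iff _ _).2 (Nat.mod_modEq _ _)
  constructor
  · suffices h : ∀ i j, i < j → j < G.girth → G.Adj (c i) (c j) →
        j = i + 1 ∨ (i = 0 ∧ j + 1 = G.girth) by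
      intro hadj
      rcases lt_trichotomy i j with hij | rfl | hij
      · rcases h i j hij hj hadj with h | ⟨rfl, h⟩
        · left
          rw [Nat.mod_eq_of_lt] <;> omega
        · right
          rw [h, Nat.mod_self]
      · exact absurd rfl hadj.ne
      · rcases h j i hij hi hadj.symm with h | ⟨rfl, h⟩
        · right
          rw [Nat.mod_eq_of_lt] <;> omega
        · left
          rw [h, Nat.mod_self]
    intro i j hij hj hadj
    by_cases h : 2 * (j - i) ≤ G.girth
    · have h1 := hc.dist_eq hconn (by omega) i h
      rw [show i + (j - i) = j by omega, dist_eq_one_iff_adj.2 hadj] at h1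
      omega
    · have h1 := hc.dist_eq hconn (by omega) j (m := i + G.girth - j) (by omega)
      rw [show j + (i + G.girth - j) = i + G.girth by omega, hc.add_girth,
        dist_eq_one_iff_adj.2 hadj.symm] at h1
      omega
  · rintro (rfl | rfl)
    · rw [e i hi]
      exact hc.adj i
    · rw [e j hj]
      exact (hc.adj j).symm

end IsShortestCycle

theorem isTail_outside {C : Set V} {u v : V}
    (hu : u ∈ C)
    (hatt : ∀ x ∈ C, ∀ y, (outside G C).Adj x y → x = u ∨ x = v)
    (huv : ¬ (outside G C).Reachable u v) :
    IsTail G u {x | x ∉ C ∧ (outside G C).Reachable u x} where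
  notMem h := h.1 hu
  adj x hx y hxy := by
    have hadj : (outside G C).Adj x y := ⟨hxy, fun h => hx.1 h.1⟩
    have hr := hx.2.trans hadj.reachable
    by_cases hy : y ∈ C
    · right
      refine (hatt y hy x hadj.symm).resolve_right ?_
      rintro rfl
      exact huv hr
    · exact Or.inl ⟨hy, hr⟩

theorem exists_outside_reachable {C : Set V} {x y : V} (p : G.Walk x y) (hx : x ∉ C) (hy : y ∈ C) :
    ∃ z ∈ C, ∃ w, (outside G C).Adj z w ∧ (outside G C).Reachable z x := by
  induction p with
  | nil => exact absurd hy hx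
  | @cons x x' y h p ih =>
    have hadj : (outside G C).Adj x x' := ⟨h, fun h => hx h.1⟩
    by_cases hx' : x' ∈ C
    · exact ⟨x', hx', x, hadj.symm, hadj.symm.reachable⟩
    · obtain ⟨z, hz, w, hw, hr⟩ := ih hx' hy
      exact ⟨z, hz, w, hw, hr.trans hadj.symm.reachable⟩

/-- A connected triangle-free graph with a cycle and without a mutual-visibility set of size four
is a frog graph. -/
theorem isFrog_of_not_exists_isMVSet_four [Finite V] (hconn : G.Connected) (htf : G.CliqueFree 3)
    (hG : ¬ G.IsAcyclic) (hno : ¬ ∃ X, IsMVSet G X ∧ X.ncard = 4) : IsFrog G := by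
  have hg := four_le_girth htf hG
  have hg0 : 0 < G.girth := by omega
  obtain ⟨c, hc, hatt⟩ : ∃ c, IsShortestCycle G c ∧
      ∀ i < G.girth, Attached G c i → i = 0 ∨ i = G.girth / 2 := by
    obtain ⟨c, hc⟩ := exists_isShortestCycle hG
    exact hc.exists_attached_imp hconn htf hg hno
  have hnr := hc.not_outside_reachable hconn hg hno hatt
  have hatt' := fun x hx y h => hc.eq_of_outside_adj hg0 hatt (x := x) (y := y) hx h
  have t₁ := isTail_outside (Set.mem_range_self 0) hatt' hnr
  have t₂ := isTail_outside (Set.mem_range_self (G.girth / 2)) (fun x hx y h => (hatt' x hx y h).symm)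
    (fun h => hnr h.symm)
  have hcov : ∀ x, x ∉ Set.range c → (outside G (Set.range c)).Reachable (c 0) x ∨
      (outside G (Set.range c)).Reachable (c (G.girth / 2)) x := by
    intro x hx
    obtain ⟨p⟩ := hconn x (c 0)
    obtain ⟨z, hz, w, hw, hr⟩ := exists_outside_reachable p hx ⟨0, rfl⟩
    rcases hatt' z hz w hw with rfl | rfl
    · exact Or.inl hr
    · exact Or.inr hr
  obtain ⟨a, e₁, inj₁, range₁, adj₁, root₁⟩ := t₁.exists_enumeration hconn
    (t₁.dist_injOn hconn htf hno (a₁ := c 1) (a₂ := c (G.girth - 1)) (hc.adj 0)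
      (by
        have := hc.adj (G.girth - 1)
        rw [show G.girth - 1 + 1 = 0 + G.girth by omega, hc.add_girth] at this
        exact this.symm)
      (hc.ne (by omega) (by omega)) (fun h => h.1 ⟨_, rfl⟩) (fun h => h.1 ⟨_, rfl⟩))
  obtain ⟨b, e₂, inj₂, range₂, adj₂, root₂⟩ := t₂.exists_enumeration hconn
    (t₂.dist_injOn hconn htf hno (a₁ := c (G.girth / 2 - 1)) (a₂ := c (G.girth / 2 + 1))
      (by
        have := hc.adj (G.girth / 2 - 1)
        rw [show G.girth / 2 - 1 + 1 = G.girth / 2 by omega] at this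
        exact this.symm) (hc.adj _)
      (hc.ne (by omega) (by omega)) (fun h => h.1 ⟨_, rfl⟩) (fun h => h.1 ⟨_, rfl⟩))
  have m₁ : ∀ k, e₁ k ∉ Set.range c ∧ (outside G (Set.range c)).Reachable (c 0) (e₁ k) :=
    fun k => range₁.subset (Set.mem_range_self k)
  have m₂ : ∀ k, e₂ k ∉ Set.range c ∧
      (outside G (Set.range c)).Reachable (c (G.girth / 2)) (e₂ k) :=
    fun k => range₂.subset (Set.mem_range_self k)
  have injc : ∀ i < G.girth, ∀ j < G.girth, c i = c j → i = j := by
    intro i hi j hj h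
    have := (hc.eq_iff i j).1 h
    rwa [Nat.ModEq, Nat.mod_eq_of_lt hi, Nat.mod_eq_of_lt hj] at this
  have hce₁ : ∀ i < G.girth, ∀ k, G.Adj (c i) (e₁ k) ↔ i = 0 ∧ (k : ℕ) = 0 := by
    refine fun i hi k => ⟨fun h => ?_, fun h => h.1 ▸ (root₁ k).2 h.2⟩
    obtain rfl : i = 0 :=
      injc _ hi _ hg0 ((t₁.adj _ (m₁ k) _ h.symm).resolve_left fun h => h.1 ⟨i, rfl⟩)
    exact ⟨rfl, (root₁ k).1 h⟩
  have hce₂ : ∀ i < G.girth, ∀ k, G.Adj (c i) (e₂ k) ↔ i = G.girth / 2 ∧ (k : ℕ) = 0 := by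
    refine fun i hi k => ⟨fun h => ?_, fun h => h.1 ▸ (root₂ k).2 h.2⟩
    obtain rfl : i = G.girth / 2 :=
      injc _ hi _ (by omega) ((t₂.adj _ (m₂ k) _ h.symm).resolve_left fun h => h.1 ⟨i, rfl⟩)
    exact ⟨rfl, (root₂ k).1 h⟩
  have hee : ∀ k l, ¬ G.Adj (e₁ k) (e₂ l) := by
    intro k l h
    rcases t₁.adj _ (m₁ k) _ h with h | h
    · exact hnr (h.2.trans (m₂ l).2.symm)
    · exact (m₂ l).1 ⟨0, h.symm⟩
  let φ : Fin G.girth ⊕ (Fin a ⊕ Fin b) → V := Sum.elim (fun i => c i) (Sum.elim e₁ e₂)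
  have hinj : Function.Injective φ := by
    rintro (i | k | k) (j | l | l) h
    · exact congrArg _ (Fin.ext (injc _ i.2 _ j.2 h))
    · exact absurd ⟨_, h⟩ (m₁ l).1
    · exact absurd ⟨_, h⟩ (m₂ l).1
    · exact absurd ⟨_, h.symm⟩ (m₁ k).1
    · exact congrArg _ (congrArg _ (inj₁ h))
    · exact absurd ((m₁ k).2.trans ((show e₁ k = e₂ l from h) ▸ (m₂ l).2.symm)) hnr
    · exact absurd ⟨_, h.symm⟩ (m₂ k).1
    · exact absurd ((m₁ l).2.trans ((show e₂ k = e₁ l from h) ▸ (m₂ k).2.symm)) hnr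
    · exact congrArg _ (congrArg _ (inj₂ h))
  have hsurj : Function.Surjective φ := by
    intro x
    by_cases hx : x ∈ Set.range c
    · obtain ⟨i, rfl⟩ := hx
      obtain ⟨j, hj, h⟩ := hc.exists_lt_girth hg0 i
      exact ⟨Sum.inl ⟨j, hj⟩, h⟩
    · rcases hcov x hx with h | h
      · obtain ⟨k, hk⟩ : x ∈ Set.range e₁ := range₁ ▸ ⟨hx, h⟩
        exact ⟨Sum.inr (Sum.inl k), hk⟩
      · obtain ⟨k, hk⟩ : x ∈ Set.range e₂ := range₂ ▸ ⟨hx, h⟩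
        exact ⟨Sum.inr (Sum.inr k), hk⟩
  refine ⟨G.girth, a, b, by omega, ⟨RelIso.symm ⟨Equiv.ofBijective φ ⟨hinj, hsurj⟩, ?_⟩⟩⟩
  rintro (i | k | k) (j | l | l)
  · exact (hc.adj_iff hconn (by omega) i.2 j.2).trans (frogGraph_adj_cycle (by omega)).symm
  · exact (hce₁ _ i.2 l).trans frogGraph_adj_cycle_fst.symm
  · exact (hce₂ _ i.2 l).trans frogGraph_adj_cycle_snd.symm
  · exact (G.adj_comm _ _).trans
      (((hce₁ _ j.2 k).trans frogGraph_adj_cycle_fst.symm).trans (adj_comm _ _ _))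
  · exact (adj₁ k l).trans frogGraph_adj_fst.symm
  · exact iff_of_false (hee k l) not_frogGraph_adj_fst_snd
  · exact (G.adj_comm _ _).trans
      (((hce₂ _ j.2 k).trans frogGraph_adj_cycle_snd.symm).trans (adj_comm _ _ _))
  · exact iff_of_false (fun h => hee l k h.symm) fun h => not_frogGraph_adj_fst_snd h.symm
  · exact (adj₂ k l).trans frogGraph_adj_snd.symm

/-! ### Mutual visibility in frog graphs -/

/-- Coordinates on a frog graph with cycle length `n`: the position `P` of the nearest cycle
vertex and the depths `D`, `E` in the tails at positions `0` and `n / 2`. -/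
structure IsFrogCoordinates (G : SimpleGraph V) (n : ℕ) (P D E : V → ℕ) : Prop where
  lt : ∀ v, P v < n
  fst : ∀ v, D v ≠ 0 → P v = 0
  snd : ∀ v, E v ≠ 0 → P v = n / 2
  ext : ∀ v w, P v = P w → D v = D w → E v = E w → v = w
  adj_iff : ∀ v w, G.Adj v w ↔
    (D v = 0 ∧ E v = 0 ∧ D w = 0 ∧ E w = 0 ∧
      (P w = P v + 1 ∨ P v = P w + 1 ∨ (P v = 0 ∧ P w + 1 = n) ∨ (P w = 0 ∧ P v + 1 = n))) ∨
    (P v = P w ∧ E v = E w ∧ (D w = D v + 1 ∨ D v = D w + 1)) ∨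
    (P v = P w ∧ D v = D w ∧ (E w = E v + 1 ∨ E v = E w + 1))
  exists_cycle : ∀ i < n, ∃ v, P v = i ∧ D v = 0 ∧ E v = 0
  exists_fst : ∀ v, ∀ j ≤ D v, ∃ w, P w = 0 ∧ D w = j ∧ E w = 0

theorem IsFrog.exists_isFrogCoordinates (h : IsFrog G) :
    ∃ n P D E, 3 ≤ n ∧ IsFrogCoordinates G n P D E := by
  obtain ⟨n, a, b, hn, ⟨f⟩⟩ := h
  refine ⟨n,
    fun v => Sum.elim (fun i : Fin n => (i : ℕ)) (Sum.elim (fun _ => 0) (fun _ => n / 2)) (f v),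
    fun v => Sum.elim (fun _ => 0) (Sum.elim (fun k : Fin a => (k : ℕ) + 1) (fun _ => 0)) (f v),
    fun v => Sum.elim (fun _ => 0) (Sum.elim (fun _ => 0) (fun k : Fin b => (k : ℕ) + 1)) (f v), hn,
    ?_, ?_, ?_, ?_, ?_, ?_, ?_⟩
  · intro v
    rcases f v with i | k | k <;> simp <;> omega
  · intro v
    rcases f v with i | k | k <;> simp
  · intro v
    rcases f v with i | k | k <;> simp
  · intro v w
    rw [← f.injective.eq_iff]
    rcases f v with i | k | k <;> rcases f w with j | l | l <;> simp [Fin.ext_iff]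
  · intro v w
    rw [← f.map_adj_iff]
    rcases f v with i | k | k <;> rcases f w with j | l | l
    · rw [frogGraph_adj_cycle (by omega)]
      have hi := i.2
      have hj := j.2
      have hmod : ∀ k < n, (k + 1) % n = if k + 1 = n then 0 else k + 1 := by
        intro k hk
        split_ifs with h
        · rw [h, Nat.mod_self]
        · exact Nat.mod_eq_of_lt (by omega)
      rw [hmod _ hi, hmod _ hj]
      simp
      split_ifs <;> omega
    · rw [frogGraph_adj_cycle_fst]; simp
    · rw [frogGraph_adj_cycle_snd]; simp
    · rw [adj_comm, frogGraph_adj_cycle_fst]; simp; omega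
    · rw [frogGraph_adj_fst]; simp
    · refine iff_of_false not_frogGraph_adj_fst_snd ?_
      simp
    · rw [adj_comm, frogGraph_adj_cycle_snd]; simp; omega
    · refine iff_of_false (fun h => not_frogGraph_adj_fst_snd h.symm) ?_
      simp
    · rw [frogGraph_adj_snd]; simp
  · intro i hi
    exact ⟨f.symm (Sum.inl ⟨i, hi⟩), by simp⟩
  · intro v j hj
    rcases Nat.eq_zero_or_pos j with rfl | h0
    · exact ⟨f.symm (Sum.inl ⟨0, by omega⟩), by simp⟩
    · have hja : j - 1 < a := by
        revert hj
        rcases f v with i | k | k <;> simp <;> omega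
      exact ⟨f.symm (Sum.inr (Sum.inl ⟨j - 1, hja⟩)), by simp; omega⟩

/-- In a mutual-visibility set, no two points are separated by other points of the set. -/
theorem IsMVSet.not_separated {X S : Set V} (hX : IsMVSet G X) {y z : V} (hy : y ∈ X) (hz : z ∈ X)
    (hyS : y ∈ S) (hzS : z ∉ S)
    (hS : ∀ v ∈ S, ∀ w ∉ S, G.Adj v w → w ∈ X ∧ w ≠ z) : False := by
  obtain ⟨p, -, -, hp⟩ := hX y hy z hz fun h => hzS (h ▸ hyS)
  have key : ∀ {y z : V} (p : G.Walk y z), y ∈ S → z ∉ S →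
      (∀ v ∈ S, ∀ w ∉ S, G.Adj v w → w ∈ X ∧ w ≠ z) →
      ∃ w ∈ p.support, w ∉ S ∧ w ∈ X ∧ w ≠ z := by
    intro y z p
    induction p with
    | nil => exact fun h h' => absurd h h'
    | @cons x y z h p ih =>
      intro hx hz hS
      by_cases hy : y ∈ S
      · obtain ⟨w, hw, h'⟩ := ih hy hz hS
        exact ⟨w, List.mem_cons_of_mem _ hw, h'⟩
      · exact ⟨y, List.mem_cons_of_mem _ p.start_mem_support, hy, hS _ hx _ hy h⟩
  obtain ⟨w, hw, hwS, hwX, hwz⟩ := key p hyS hzS hS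
  rcases hp w hw hwX with rfl | rfl
  · exact hwS hyS
  · exact hwz rfl

/-- A potential that is `1`-Lipschitz off the blocking points bounds the distance of a visible
pair. -/
theorem VisiblePair.sub_le_dist {X : Set V} {x y : V} (h : VisiblePair G X x y) (F : V → ℤ)
    (hF : ∀ v w, G.Adj v w → (v ∈ X → v = x ∨ v = y) → (w ∈ X → w = x ∨ w = y) → F w ≤ F v + 1) :
    F y - F x ≤ G.dist x y := by
  obtain ⟨p, -, hl, hp⟩ := h
  have key : ∀ {s t : V} (p : G.Walk s t), (∀ w ∈ p.support, w ∈ X → w = x ∨ w = y) →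
      F t - F s ≤ p.length := by
    intro s t p
    induction p with
    | nil => simp
    | @cons s r t h p ih =>
      intro hp
      have h1 := ih fun w hw => hp w (List.mem_cons_of_mem _ hw)
      have h2 := hF s r h (hp s (by simp)) (hp r (by simp))
      rw [Walk.length_cons]
      push_cast
      omega
  rw [← hl]
  exact key p hp

theorem dist_le_of_descent (hconn : G.Connected) {R : Set V} {x : V} (h : V → ℕ)
    (hR : ∀ v ∈ R, v = x ∨ ∃ w ∈ R, G.Adj v w ∧ h v = h w + 1) {y : V} (hy : y ∈ R) :
    G.dist y x ≤ h y := by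
  suffices ∀ n, ∀ y ∈ R, h y = n → G.dist y x ≤ n from this _ y hy rfl
  intro n
  induction n with
  | zero =>
    intro y hy h0
    rcases hR y hy with rfl | ⟨w, -, -, hw⟩
    · simp
    · omega
  | succ n ih =>
    intro y hy hn
    rcases hR y hy with rfl | ⟨w, hwR, hadj, hw⟩
    · simp
    · have := ih w hwR (by omega)
      have := hadj.dist_le_dist_add_one hconn x
      omega

namespace IsFrogCoordinates

variable {n : ℕ} {P D E : V → ℕ}

theorem not_isAcyclic (hF : IsFrogCoordinates G n P D E) (hn : 3 ≤ n) : ¬ G.IsAcyclic := by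
  intro hG
  rw [isAcyclic_iff_forall_adj_isBridge] at hG
  obtain ⟨u, hu, hu'⟩ := hF.exists_cycle 0 (by omega)
  obtain ⟨v, hv, hv'⟩ := hF.exists_cycle (n - 1) (by omega)
  have hb := hG (v := u) (w := v) ((hF.adj_iff _ _).2 (by omega))
  rw [isBridge_iff] at hb
  have key : ∀ i < n, ∀ w, P w = i → D w = 0 → E w = 0 →
      (G \ fromEdgeSet {s(u, v)}).Reachable u w := by
    intro i
    induction i with
    | zero =>
      intro _ w h1 h2 h3
      rw [hF.ext w u (by omega) (by omega) (by omega)]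
    | succ i ih =>
      intro hi w h1 h2 h3
      obtain ⟨w', hw, hw'⟩ := hF.exists_cycle i (by omega)
      refine (ih (by omega) w' hw hw'.1 hw'.2).trans (Adj.reachable ?_)
      refine ⟨(hF.adj_iff _ _).2 (by omega), ?_⟩
      rw [fromEdgeSet_adj]
      rintro ⟨h, -⟩
      rcases Sym2.eq_iff.1 h with ⟨rfl, rfl⟩ | ⟨rfl, rfl⟩ <;> omega
  exact hb (key _ (by omega) v hv hv'.1 hv'.2)

theorem dist_le (hF : IsFrogCoordinates G n P D E) (hconn : G.Connected) (hn : 3 ≤ n) {x y : V}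
    (hx : P x = 0) (hy : D y = 0 ∧ E y = 0) (hy0 : P y ≠ 0) :
    G.dist x y ≤ D x + P y ∧ G.dist x y + P y ≤ D x + n := by
  have hEx : E x = 0 := by
    by_contra h
    have := hF.snd x h
    omega
  have tail : ∀ v, P v = 0 → D v ≤ D x → E v = 0 → v = x ∨ ∃ w, P w = 0 ∧ D w ≤ D x ∧ E w = 0 ∧
      G.Adj v w ∧ D w = D v + 1 := by
    intro v h1 h2 h3
    rcases h2.eq_or_lt with h | h
    · exact Or.inl (hF.ext _ _ (by omega) h (by omega))
    · obtain ⟨w, h4, h5, h6⟩ := hF.exists_fst x (D v + 1) (by omega)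
      exact Or.inr ⟨w, h4, by omega, h6, (hF.adj_iff _ _).2 (by omega), h5⟩
  have hlt := hF.lt y
  constructor
  · rw [G.dist_comm]
    refine (dist_le_of_descent hconn (R := {v | D v ≤ D x ∧ E v = 0})
      (fun v => D x - D v + P v) ?_ (y := y) ⟨by omega, hy.2⟩).trans (by omega)
    rintro v ⟨h1, h2⟩
    by_cases h0 : P v = 0
    · rcases tail v h0 h1 h2 with h | ⟨w, h3, h4, h5, h6, h7⟩
      · exact Or.inl h
      · exact Or.inr ⟨w, ⟨h4, h5⟩, h6, by omega⟩
    · have h3 := mt (hF.fst v) h0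
      have := hF.lt v
      obtain ⟨w, h4, h5, h6⟩ := hF.exists_cycle (P v - 1) (by omega)
      exact Or.inr ⟨w, ⟨by omega, h6⟩, (hF.adj_iff _ _).2 (by omega), by omega⟩
  · suffices G.dist y x ≤ D x + n - P y by
      rw [G.dist_comm]
      omega
    refine (dist_le_of_descent hconn (R := {v | D v ≤ D x ∧ E v = 0})
      (fun v => if P v = 0 then D x - D v else D x + n - P v) ?_ (y := y)
      ⟨by omega, hy.2⟩).trans (by simp [hy0])
    rintro v ⟨h1, h2⟩
    by_cases h0 : P v = 0
    · rcases tail v h0 h1 h2 with h | ⟨w, h3, h4, h5, h6, h7⟩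
      · exact Or.inl h
      · refine Or.inr ⟨w, ⟨h4, h5⟩, h6, ?_⟩
        simp only [h0, h3, if_true]
        omega
    · have h3 := mt (hF.fst v) h0
      have := hF.lt v
      by_cases hv : P v + 1 = n
      · obtain ⟨w, h4, h5, h6⟩ := hF.exists_cycle 0 (by omega)
        refine Or.inr ⟨w, ⟨by omega, h6⟩, (hF.adj_iff _ _).2 (by omega), ?_⟩
        simp only [h0, h4, if_true, if_false]
        omega
      · obtain ⟨w, h4, h5, h6⟩ := hF.exists_cycle (P v + 1) (by omega)
        refine Or.inr ⟨w, ⟨by omega, h6⟩, (hF.adj_iff _ _).2 (by omega), ?_⟩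
        simp only [h0, h4, if_false]
        simp
        omega

end IsFrogCoordinates

namespace IsFrogCoordinates

variable {n : ℕ} {P D E : V → ℕ} {X : Set V}

theorem not_fst_between (hF : IsFrogCoordinates G n P D E) (hn : 3 ≤ n) (hX : IsMVSet G X)
    {x y z : V} (hx : x ∈ X) (hy : y ∈ X) (hz : z ∈ X) (hxz : x ≠ z) (hPx : P x = 0)
    (hPy : P y = 0) (hxy : D x < D y) (h : P z = 0 → D z < D x) : False := by
  refine hX.not_separated (S := {v | P v = 0 ∧ D x < D v}) hy hz ⟨hPy, hxy⟩
    (fun h' => (h h'.1).not_gt h'.2) ?_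
  rintro v ⟨h1, h2⟩ w hw hadj
  have hw' : ¬ (P w = 0 ∧ D x < D w) := hw
  have ex := mt (hF.snd x)
  have ew := mt (hF.snd w)
  have := (hF.adj_iff v w).1 hadj
  obtain rfl : w = x := hF.ext _ _ (by omega) (by omega) (by omega)
  exact ⟨hx, hxz⟩

theorem not_snd_between (hF : IsFrogCoordinates G n P D E) (hn : 3 ≤ n) (hX : IsMVSet G X)
    {x y z : V} (hx : x ∈ X) (hy : y ∈ X) (hz : z ∈ X) (hxz : x ≠ z) (hPx : P x = n / 2)
    (hPy : P y = n / 2) (hxy : E x < E y) (h : P z = n / 2 → E z < E x) : False := by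
  refine hX.not_separated (S := {v | P v = n / 2 ∧ E x < E v}) hy hz ⟨hPy, hxy⟩
    (fun h' => (h h'.1).not_gt h'.2) ?_
  rintro v ⟨h1, h2⟩ w hw hadj
  have hw' : ¬ (P w = n / 2 ∧ E x < E w) := hw
  have ex := mt (hF.fst x)
  have ew := mt (hF.fst w)
  have := (hF.adj_iff v w).1 hadj
  obtain rfl : w = x := hF.ext _ _ (by omega) (by omega) (by omega)
  exact ⟨hx, hxz⟩

theorem pos_ne (hF : IsFrogCoordinates G n P D E) (hn : 3 ≤ n) (hX : IsMVSet G X)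
    {x y z : V} (hx : x ∈ X) (hy : y ∈ X) (hz : z ∈ X) (hxy : x ≠ y) (hxz : x ≠ z)
    (hyz : y ≠ z) : P x ≠ P y := by
  intro hP
  have hne : ∀ v w : V, v ≠ w → P v = P w → D v ≠ D w ∨ E v ≠ E w := by
    intro v w hvw h
    by_contra! h'
    exact hvw (hF.ext _ _ h h'.1 h'.2)
  have nxy := hne _ _ hxy
  have nxz := hne _ _ hxz
  have nyz := hne _ _ hyz
  have fx := hF.fst x
  have fy := hF.fst y
  have fz := hF.fst z
  have sx := hF.snd x
  have sy := hF.snd y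
  have sz := hF.snd z
  rcases nxy hP with h | h
  · have h0 : P x = 0 := by omega
    by_cases hPz : P z = 0
    · have : (D z < D x ∧ D x < D y) ∨ (D z < D y ∧ D y < D x) ∨ (D y < D z ∧ D z < D x) ∨
          (D x < D z ∧ D z < D y) ∨ (D y < D x ∧ D x < D z) ∨ (D x < D y ∧ D y < D z) := by
        have := nxz (by omega)
        have := nyz (by omega)
        omega
      rcases this with h | h | h | h | h | h
      · exact hF.not_fst_between hn hX hx hy hz hxz h0 (by omega) h.2 fun _ => h.1
      · exact hF.not_fst_between hn hX hy hx hz hyz (by omega) h0 h.2 fun _ => h.1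
      · exact hF.not_fst_between hn hX hz hx hy hyz.symm hPz h0 h.2 fun _ => h.1
      · exact hF.not_fst_between hn hX hz hy hx hxz.symm hPz (by omega) h.2 fun _ => h.1
      · exact hF.not_fst_between hn hX hx hz hy hxy h0 hPz h.2 fun _ => h.1
      · exact hF.not_fst_between hn hX hy hz hx hxy.symm (by omega) hPz h.2 fun _ => h.1
    · rcases h.lt_or_gt with h | h
      · exact hF.not_fst_between hn hX hx hy hz hxz h0 (by omega) h fun h => absurd h hPz
      · exact hF.not_fst_between hn hX hy hx hz hyz (by omega) h0 h fun h => absurd h hPz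
  · have h0 : P x = n / 2 := by omega
    by_cases hPz : P z = n / 2
    · have : (E z < E x ∧ E x < E y) ∨ (E z < E y ∧ E y < E x) ∨ (E y < E z ∧ E z < E x) ∨
          (E x < E z ∧ E z < E y) ∨ (E y < E x ∧ E x < E z) ∨ (E x < E y ∧ E y < E z) := by
        have := nxz (by omega)
        have := nyz (by omega)
        omega
      rcases this with h | h | h | h | h | h
      · exact hF.not_snd_between hn hX hx hy hz hxz h0 (by omega) h.2 fun _ => h.1
      · exact hF.not_snd_between hn hX hy hx hz hyz (by omega) h0 h.2 fun _ => h.1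
      · exact hF.not_snd_between hn hX hz hx hy hyz.symm hPz h0 h.2 fun _ => h.1
      · exact hF.not_snd_between hn hX hz hy hx hxz.symm hPz (by omega) h.2 fun _ => h.1
      · exact hF.not_snd_between hn hX hx hz hy hxy h0 hPz h.2 fun _ => h.1
      · exact hF.not_snd_between hn hX hy hz hx hxy.symm (by omega) hPz h.2 fun _ => h.1
    · rcases h.lt_or_gt with h | h
      · exact hF.not_snd_between hn hX hx hy hz hxz h0 (by omega) h fun h => absurd h hPz
      · exact hF.not_snd_between hn hX hy hx hz hyz (by omega) h0 h fun h => absurd h hPz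

theorem not_cycle_between (hF : IsFrogCoordinates G n P D E) (hX : IsMVSet G X) {x y z w : V}
    (hx : x ∈ X) (hy : y ∈ X) (hz : z ∈ X) (hw : w ∈ X) (hxy : P x < P y) (hyz : P y < P z)
    (hxw : x ≠ w) (hzw : z ≠ w) (hout : P w < P x ∨ P z < P w) :
    ¬ (D x = 0 ∧ E x = 0 ∧ D z = 0 ∧ E z = 0) := by
  rintro ⟨hx0, hx0', hz0, hz0'⟩
  refine hX.not_separated (S := {v | P x < P v ∧ P v < P z}) hy hw ⟨hxy, hyz⟩
    (fun h => by have := h.1; have := h.2; omega) ?_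
  rintro v ⟨h1, h2⟩ u hu hadj
  have hu' : ¬ (P x < P u ∧ P u < P z) := hu
  have := hF.lt z
  have := (hF.adj_iff v u).1 hadj
  have : P u = P x ∨ P u = P z := by omega
  rcases this with h | h
  · obtain rfl : u = x := hF.ext _ _ h (by omega) (by omega)
    exact ⟨hx, hxw⟩
  · obtain rfl : u = z := hF.ext _ _ h (by omega) (by omega)
    exact ⟨hz, hzw⟩

theorem not_isMVSet_of_lt (hF : IsFrogCoordinates G n P D E) (hconn : G.Connected) (hn : 3 ≤ n)
    (hX : IsMVSet G X) {x₀ x₁ x₂ x₃ : V} (h₀ : x₀ ∈ X) (h₁ : x₁ ∈ X) (h₂ : x₂ ∈ X) (h₃ : x₃ ∈ X)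
    (h₀₁ : P x₀ < P x₁) (h₁₂ : P x₁ < P x₂) (h₂₃ : P x₂ < P x₃) : False := by
  have ne : ∀ {v w : V}, P v < P w → v ≠ w := fun h h' => h.ne (congrArg P h')
  have c₁ := hF.not_cycle_between hX h₁ h₂ h₃ h₀ h₁₂ h₂₃ (ne h₀₁).symm
    (ne (h₀₁.trans (h₁₂.trans h₂₃))).symm (Or.inl h₀₁)
  have c₂ := hF.not_cycle_between hX h₀ h₁ h₂ h₃ h₀₁ h₁₂ (ne (h₀₁.trans (h₁₂.trans h₂₃)))
    (ne h₂₃) (Or.inr h₂₃)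
  have f₀ := hF.fst x₀
  have f₁ := hF.fst x₁
  have f₂ := hF.fst x₂
  have f₃ := hF.fst x₃
  have s₀ := hF.snd x₀
  have s₁ := hF.snd x₁
  have s₂ := hF.snd x₂
  have s₃ := hF.snd x₃
  have l₃ := hF.lt x₃
  have hvis := hX x₀ h₀ x₂ h₂ (ne (h₀₁.trans h₁₂))
  have hP₀ : P x₀ = 0 := by omega
  have hup := hF.dist_le hconn hn (x := x₀) (y := x₂) hP₀ (by omega) (by omega)
  have hE₀ : E x₀ = 0 := by omega
  have blocked : ∀ x ∈ X, x ≠ x₀ → x ≠ x₂ → D x = 0 → E x = 0 →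
      ∀ v, (v ∈ X → v = x₀ ∨ v = x₂) → P v ≠ P x ∨ D v ≠ 0 ∨ E v ≠ 0 := by
    intro x hx hx₀ hx₂ hD hE v hv
    by_contra! h
    obtain rfl : v = x := hF.ext _ _ h.1 (by omega) (by omega)
    exact (hv hx).elim hx₀ hx₂
  by_cases hE : E x₁ = 0
  · have hle := hvis.sub_le_dist
      (fun v => if P v < P x₁ then - (P v : ℤ) - D v else (n : ℤ) - P v) ?_
    · simp only [h₀₁, if_true, h₁₂.not_gt, if_false] at hle
      omega
    · intro v w hadj hv hw
      have bv := blocked x₁ h₁ (ne h₀₁).symm (ne h₁₂) (by omega) hE v hv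
      have bw := blocked x₁ h₁ (ne h₀₁).symm (ne h₁₂) (by omega) hE w hw
      have := hF.lt v
      have := hF.lt w
      have := hF.fst v
      have := hF.fst w
      rcases (hF.adj_iff v w).1 hadj with h | h | h <;> split_ifs <;> omega
  · have hle := hvis.sub_le_dist
      (fun v => if P v < P x₃ then (P v : ℤ) - D v else (P v : ℤ) - n) ?_
    · rw [if_pos h₂₃, if_pos (by omega)] at hle
      omega
    · intro v w hadj hv hw
      have bv := blocked x₃ h₃ (ne (h₀₁.trans (h₁₂.trans h₂₃))).symm (ne h₂₃).symm (by omega)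
        (by omega) v hv
      have bw := blocked x₃ h₃ (ne (h₀₁.trans (h₁₂.trans h₂₃))).symm (ne h₂₃).symm (by omega)
        (by omega) w hw
      have := hF.lt v
      have := hF.lt w
      have := hF.fst v
      have := hF.fst w
      rcases (hF.adj_iff v w).1 hadj with h | h | h <;> split_ifs <;> omega

theorem ncard_le_three [Finite V] (hF : IsFrogCoordinates G n P D E) (hconn : G.Connected)
    (hn : 3 ≤ n) (hX : IsMVSet G X) : X.ncard ≤ 3 := by
  classical
  by_contra! hcard
  have hfin : X.Finite := X.toFinite
  have hinj : Set.InjOn P X := by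
    intro x hx y hy hxy
    by_contra hne
    obtain ⟨z, hz, hz'⟩ := Set.exists_mem_notMem_of_ncard_lt_ncard (s := {x, y}) (t := X)
      (by rw [Set.ncard_pair hne]; omega)
    simp only [Set.mem_insert_iff, Set.mem_singleton_iff, not_or] at hz'
    exact hF.pos_ne hn hX hx hy hz hne (Ne.symm hz'.1) (Ne.symm hz'.2) hxy
  have hcard' : 4 ≤ ((hfin.image P).toFinset).card := by
    rwa [← Set.ncard_eq_toFinset_card _ (hfin.image P), hinj.ncard_image]
  have hmem : ∀ i, ∃ x ∈ X, P x = Finset.orderEmbOfCardLe _ hcard' i := by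
    intro i
    simpa using Finset.orderEmbOfCardLe_mem _ hcard' i
  choose x hx hPx using hmem
  have hlt : ∀ i j, i < j → P (x i) < P (x j) := by
    intro i j hij
    rw [hPx, hPx]
    exact (Finset.orderEmbOfCardLe _ hcard').strictMono hij
  exact hF.not_isMVSet_of_lt hconn hn hX (hx 0) (hx 1) (hx 2) (hx 3) (hlt _ _ (by decide))
    (hlt _ _ (by decide)) (hlt _ _ (by decide))

end IsFrogCoordinates

theorem IsFrog.mu_eq_three [Finite V] (h : IsFrog G) (hconn : G.Connected)
    (htf : G.CliqueFree 3) : mu G = 3 := by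
  obtain ⟨n, P, D, E, hn, hF⟩ := h.exists_isFrogCoordinates
  have hG := hF.not_isAcyclic hn
  obtain ⟨c, hc⟩ := exists_isShortestCycle hG
  exact mu_eq_three_iff.2 ⟨hc.exists_isMVSet_three hconn (four_le_girth htf hG),
    fun X hX => hF.ncard_le_three hconn hn hX⟩

end MutualVisibility

theorem stmt17 {V : Type*} [Fintype V] (G : SimpleGraph V) [DecidableRel G.Adj]
    (hconn : G.Connected) (htf : G.CliqueFree 3) :
    mu G = 3 ↔ ((G.IsTree ∧ {v | G.degree v = 1}.ncard = 3) ∨ IsFrog G) := by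
  constructor
  · intro h
    by_cases hG : G.IsAcyclic
    · have hT : G.IsTree := ⟨hconn, hG⟩
      exact Or.inl ⟨hT, hT.mu_eq_three_iff.1 h⟩
    · refine Or.inr (isFrog_of_not_exists_isMVSet_four hconn htf hG ?_)
      rintro ⟨X, hX, hX4⟩
      have := (mu_eq_three_iff.1 h).2 X hX
      omega
  · rintro (⟨hT, hl⟩ | hF)
    · exact hT.mu_eq_three_iff.2 hl
    · exact hF.mu_eq_three hconn htf
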